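/- Fix an integer d ≥ 3 and a real p with 1/(d-1) < p < 1. For every ε, b > 0 there exist R and c > 0 such that: if 𝒢 is a regular (b,d)-expander on n vertices with girth greater than 2R, and G ∼ 𝒢_p, then the probability that the total number of vertices in the 2-cores of all connected components of G other than a largest component exceeds εn is at most exp(−c n). -/

import Mathlib

open scoped Classical symmDiff

noncomputable section

namespace Percolation

variable {V : Type} [Fintype V] [DecidableEq V]

/-- The edge set of `G` as a finset. -/
noncomputable def edgeFinset' (G : SimpleGraph V) : Finset (Sym2 V) :=
  Finset.univ.filter (· ∈ G.edgeSet)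

/-- Probability that bond percolation on `G` with parameter `p` produces a spanning
subgraph satisfying `P`. -/
noncomputable def percProb (G : SimpleGraph V) (p : ℝ) (P : SimpleGraph V → Prop) : ℝ :=
  ∑ s ∈ (edgeFinset' G).powerset,
    (p ^ s.card * (1 - p) ^ ((edgeFinset' G).card - s.card)) *
      (if P (SimpleGraph.fromEdgeSet (↑s)) then 1 else 0)

/-- Joint probability for two independent bond percolations on `G`. -/
noncomputable def percProb2 (G : SimpleGraph V) (p₁ p₂ : ℝ)
    (P : SimpleGraph V → SimpleGraph V → Prop) : ℝ :=
  ∑ s ∈ (edgeFinset' G).powerset, ∑ t ∈ (edgeFinset' G).powerset,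
    (p₁ ^ s.card * (1 - p₁) ^ ((edgeFinset' G).card - s.card)) *
    (p₂ ^ t.card * (1 - p₂) ^ ((edgeFinset' G).card - t.card)) *
      (if P (SimpleGraph.fromEdgeSet (↑s)) (SimpleGraph.fromEdgeSet (↑t)) then 1 else 0)

/-- Number of edges of `G` joining `S` to its complement. -/
noncomputable def cutCard (G : SimpleGraph V) (S : Finset V) : ℕ :=
  ((edgeFinset' G).filter (fun e => ∃ x ∈ S, ∃ y, y ∉ S ∧ e = s(x, y))).card

/-- `G` is a `(b,d)`-expander: max degree at most `d`, and every vertex set of size at most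
`n/2` has at least `b|S|` edges to its complement. -/
def IsExpander (G : SimpleGraph V) (b : ℝ) (d : ℕ) : Prop :=
  (∀ v, (G.neighborSet v).ncard ≤ d) ∧
  ∀ S : Finset V, (S.card : ℝ) ≤ Fintype.card V / 2 → b * S.card ≤ cutCard G S

/-- `G` is a regular `(b,d)`-expander. -/
def IsRegularExpander (G : SimpleGraph V) (b : ℝ) (d : ℕ) : Prop :=
  IsExpander G b d ∧ ∀ v, (G.neighborSet v).ncard = d

/-- The vertices of the connected component `c` of `G`. -/
noncomputable def compVerts (G : SimpleGraph V) (c : G.ConnectedComponent) : Finset V :=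
  Finset.univ.filter (fun v => G.connectedComponentMk v = c)

/-- The edges of the connected component `c` of `G`. -/
noncomputable def compEdges (G : SimpleGraph V) (c : G.ConnectedComponent) : Finset (Sym2 V) :=
  (edgeFinset' G).filter (fun e => ∀ v ∈ e, G.connectedComponentMk v = c)

/-- `c` is a largest connected component of `G`. -/
def IsLargestComp (G : SimpleGraph V) (c : G.ConnectedComponent) : Prop :=
  ∀ c' : G.ConnectedComponent, (compVerts G c').card ≤ (compVerts G c).card

/-- The 2-core of the connected component `c` of `G` : the maximal subgraph of `G`
supported inside `c` all of whose vertices have degree at least 2. -/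
noncomputable def twoCoreComp (G : SimpleGraph V) (c : G.ConnectedComponent) : SimpleGraph V :=
  sSup {H : SimpleGraph V | H ≤ G ∧ (∀ v ∈ H.support, G.connectedComponentMk v = c) ∧
    ∀ v ∈ H.support, 2 ≤ (H.neighborSet v).ncard}

/-- The event `A^R_{x,y}(H)`: the connected component of `y` in `H` with the edge `xy`
removed (if present) has at least `R` vertices. -/
def eventA (H : SimpleGraph V) (R : ℕ) (x y : V) : Prop :=
  R ≤ (compVerts (H.deleteEdges {s(x, y)})
        ((H.deleteEdges {s(x, y)}).connectedComponentMk y)).card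

/-- `E₁(H)`: edges `xy` of `H` such that `A^R_{x,y}` or `A^R_{y,x}` holds. -/
noncomputable def E1set (H : SimpleGraph V) (R : ℕ) : Finset (Sym2 V) :=
  (edgeFinset' H).filter (fun e => ∃ x y, e = s(x, y) ∧ (eventA H R x y ∨ eventA H R y x))

/-- `V₁(H)`: vertices `x` such that for some `y`, `xy ∈ E(H)` and `A^R_{x,y}` holds. -/
noncomputable def V1set (H : SimpleGraph V) (R : ℕ) : Finset V :=
  Finset.univ.filter (fun x => ∃ y, H.Adj x y ∧ eventA H R x y)

/-- `E₂(H)`: edges `xy` of `H` such that both `A^R_{x,y}` and `A^R_{y,x}` hold. -/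
noncomputable def E2set (H : SimpleGraph V) (R : ℕ) : Finset (Sym2 V) :=
  (edgeFinset' H).filter (fun e => ∃ x y, e = s(x, y) ∧ eventA H R x y ∧ eventA H R y x)

/-- `V₂(H)`: vertices incident to an edge of `E₂(H)`. -/
noncomputable def V2set (H : SimpleGraph V) (R : ℕ) : Finset V :=
  Finset.univ.filter (fun x => ∃ e ∈ E2set H R, x ∈ e)

/-- `V̄₁(H)`: vertices `y` such that `A^R_{x,y}(H)` holds for some `x`. -/
noncomputable def Vbar1 (H : SimpleGraph V) (R : ℕ) : Finset V :=
  Finset.univ.filter (fun y => ∃ x, eventA H R x y)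

/-- `S` is `k`-thick in `H`: a union of pairwise disjoint subsets, each of size at least
`k`, each inducing a connected subgraph of `H`. -/
def IsThick (H : SimpleGraph V) (k : ℕ) (S : Finset V) : Prop :=
  ∃ P : Finset (Finset V),
    (∀ T ∈ P, k ≤ T.card ∧ (H.induce (↑T : Set V)).Connected) ∧
    (↑P : Set (Finset V)).PairwiseDisjoint id ∧ S = P.biUnion id

/-- `S` is a separator of `K`. -/
def IsSeparator {W : Type} [Fintype W] (K : SimpleGraph W) (S : Finset W) : Prop :=
  ∃ A B : Finset W, Disjoint A B ∧ Disjoint A S ∧ Disjoint B S ∧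
    (∀ w, w ∈ A ∨ w ∈ B ∨ w ∈ S) ∧
    (∀ a ∈ A, ∀ b ∈ B, ¬ K.Adj a b) ∧
    3 * A.card ≤ 2 * Fintype.card W ∧ 3 * B.card ≤ 2 * Fintype.card W

/-!
Every vertex of a 2-core starts non-backtracking walks of all lengths, so the set of vertices that
start one of a fixed length `R` contains all 2-cores. This set is local: below half the girth its
expected density is the survival probability `rootProb` of a branching process up to depth `R`,
and its size is exponentially concentrated because each edge influences boundedly many vertices.
As the limiting survival probability is left-continuous in `p`, some `p' < p` gives almost the same
density, and `G_p` arises from `G_{p'}` by sprinkling further edges. If the outer 2-cores of `G_p`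
were large, the sprinkled edges would leave the components of `G_{p'}` with at least `R` vertices
split into two parts of linear size. There are at most `2 ^ (n / R)` such partitions, and by
expansion each part is joined to the other by linearly many disjoint paths of bounded length, so a
given partition survives the sprinkling with probability at most `exp (1 - κ n)`, where `κ` does
not depend on `R`. For small `n` it suffices that the empty configuration is not bad.
-/

section RandomSubset

variable {α β ι : Type*} {p : ℝ} {E : Finset α}

/-- Expectation of `F` at the random subset of `E` that contains each element independently with
probability `p`, written as a finite sum so that it matches `percProb`. -/
def bernoulliExp (p : ℝ) (E : Finset α) (F : Finset α → ℝ) : ℝ :=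
  ∑ s ∈ E.powerset, p ^ s.card * (1 - p) ^ (E.card - s.card) * F s

/-- Probability that the random subset of `E` that contains each element independently with
probability `p` satisfies `P`. -/
def bernoulliProb (p : ℝ) (E : Finset α) (P : Finset α → Prop) : ℝ :=
  bernoulliExp p E fun s => if P s then 1 else 0

lemma percProb_eq_bernoulliProb {V : Type} [Fintype V] (G : SimpleGraph V) (p : ℝ)
    (P : SimpleGraph V → Prop) :
    percProb G p P = bernoulliProb p (edgeFinset' G) fun s => P (SimpleGraph.fromEdgeSet ↑s) :=
  rfl

lemma bernoulliExp_empty (p : ℝ) (F : Finset α → ℝ) : bernoulliExp p ∅ F = F ∅ := by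
  simp [bernoulliExp]

lemma bernoulliExp_insert [DecidableEq α] (p : ℝ) {e : α} (he : e ∉ E) (F : Finset α → ℝ) :
    bernoulliExp p (insert e E) F
      = (1 - p) * bernoulliExp p E F + p * bernoulliExp p E (fun s => F (insert e s)) := by
  unfold bernoulliExp
  rw [Finset.sum_powerset_insert he, Finset.mul_sum, Finset.mul_sum]
  congr 1 <;> refine Finset.sum_congr rfl fun s hs => ?_
  · rw [Finset.card_insert_of_notMem he,
      Nat.sub_add_comm (Finset.card_le_card (Finset.mem_powerset.1 hs)), pow_succ]
    ring
  · rw [Finset.card_insert_of_notMem he,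
      Finset.card_insert_of_notMem fun h => he (Finset.mem_powerset.1 hs h),
      Nat.add_sub_add_right, pow_succ]
    ring

lemma bernoulliExp_congr {F F' : Finset α → ℝ} (h : ∀ s ⊆ E, F s = F' s) :
    bernoulliExp p E F = bernoulliExp p E F' :=
  Finset.sum_congr rfl fun s hs => by rw [h s (Finset.mem_powerset.1 hs)]

lemma bernoulliExp_mono (hp : p ∈ Set.Icc 0 1) {F F' : Finset α → ℝ} (h : ∀ s ⊆ E, F s ≤ F' s) :
    bernoulliExp p E F ≤ bernoulliExp p E F' :=
  Finset.sum_le_sum fun s hs => mul_le_mul_of_nonneg_left (h s (Finset.mem_powerset.1 hs))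
    (mul_nonneg (pow_nonneg hp.1 _) (pow_nonneg (sub_nonneg.2 hp.2) _))

lemma bernoulliExp_add (p : ℝ) (E : Finset α) (F F' : Finset α → ℝ) :
    bernoulliExp p E (fun s => F s + F' s) = bernoulliExp p E F + bernoulliExp p E F' := by
  simp only [bernoulliExp, mul_add, Finset.sum_add_distrib]

lemma bernoulliExp_const_mul (p c : ℝ) (E : Finset α) (F : Finset α → ℝ) :
    bernoulliExp p E (fun s => c * F s) = c * bernoulliExp p E F := by
  simp only [bernoulliExp, Finset.mul_sum, mul_left_comm]

lemma bernoulliExp_sum (p : ℝ) (E : Finset α) (I : Finset ι) (F : ι → Finset α → ℝ) :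
    bernoulliExp p E (fun s => ∑ i ∈ I, F i s) = ∑ i ∈ I, bernoulliExp p E (F i) := by
  simp only [bernoulliExp, Finset.mul_sum]
  exact Finset.sum_comm

lemma bernoulliExp_const (p c : ℝ) (E : Finset α) : bernoulliExp p E (fun _ => c) = c := by
  induction E using Finset.induction_on with
  | empty => exact bernoulliExp_empty _ _
  | insert e E he ih => rw [bernoulliExp_insert p he, ih]; ring

lemma bernoulliProb_mono (hp : p ∈ Set.Icc 0 1) {P Q : Finset α → Prop}
    (h : ∀ s ⊆ E, P s → Q s) : bernoulliProb p E P ≤ bernoulliProb p E Q := by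
  refine bernoulliExp_mono hp fun s hs => ?_
  by_cases hP : P s
  · rw [if_pos hP, if_pos (h s hs hP)]
  · rw [if_neg hP]
    split_ifs <;> norm_num

lemma bernoulliProb_congr {P Q : Finset α → Prop} (h : ∀ s ⊆ E, (P s ↔ Q s)) :
    bernoulliProb p E P = bernoulliProb p E Q :=
  bernoulliExp_congr fun s hs => by simp only [h s hs]

lemma bernoulliProb_not (p : ℝ) (E : Finset α) (P : Finset α → Prop) :
    bernoulliProb p E (fun s => ¬ P s) = 1 - bernoulliProb p E P := by
  have hsum : bernoulliProb p E (fun s => ¬ P s) + bernoulliProb p E P = 1 := by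
    rw [bernoulliProb, bernoulliProb, ← bernoulliExp_add]
    refine (bernoulliExp_congr fun s _ => ?_).trans (bernoulliExp_const p 1 E)
    by_cases h : P s <;> simp [h]
  exact eq_sub_of_add_eq hsum

lemma bernoulliProb_nonneg (hp : p ∈ Set.Icc 0 1) (E : Finset α) (P : Finset α → Prop) :
    0 ≤ bernoulliProb p E P := by
  rw [← bernoulliExp_const p 0 E]
  exact bernoulliExp_mono hp fun s _ => by split_ifs <;> norm_num

lemma bernoulliProb_exists_mem_le (hp : p ∈ Set.Icc 0 1) (E : Finset α) (I : Finset ι)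
    (P : ι → Finset α → Prop) :
    bernoulliProb p E (fun s => ∃ i ∈ I, P i s) ≤ ∑ i ∈ I, bernoulliProb p E (P i) := by
  simp only [bernoulliProb, ← bernoulliExp_sum]
  refine bernoulliExp_mono hp fun s _ => ?_
  have hnonneg : ∀ i ∈ I, (0 : ℝ) ≤ if P i s then 1 else 0 := fun i _ => by
    split_ifs <;> norm_num
  split_ifs with h
  · obtain ⟨i, hi, hPi⟩ := h
    exact (if_pos hPi).symm.le.trans (Finset.single_le_sum hnonneg hi)
  · exact Finset.sum_nonneg hnonneg

lemma bernoulliProb_le_of_not_empty (hp : p ∈ Set.Icc 0 1) {P : Finset α → Prop} (h : ¬ P ∅) :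
    bernoulliProb p E P ≤ 1 - (1 - p) ^ E.card := by
  have hempty : (1 - p) ^ E.card ≤ bernoulliProb p E fun s => ¬ P s := by
    refine le_of_eq_of_le ?_ (Finset.single_le_sum (fun s _ => ?_) (Finset.empty_mem_powerset E))
    · simp [h]
    · exact mul_nonneg (mul_nonneg (pow_nonneg hp.1 _) (pow_nonneg (sub_nonneg.2 hp.2) _))
        (by dsimp only; split_ifs <;> norm_num)
  linarith [bernoulliProb_not p E P]

section Union

variable [DecidableEq α] {p₁ p₂ : ℝ}

lemma bernoulliExp_union (h : 1 - p = (1 - p₁) * (1 - p₂)) (E : Finset α)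
    (F : Finset α → ℝ) :
    bernoulliExp p E F = bernoulliExp p₁ E fun s => bernoulliExp p₂ E fun t => F (s ∪ t) := by
  induction E using Finset.induction_on generalizing F with
  | empty => simp only [bernoulliExp_empty, Finset.empty_union]
  | insert e E he ih =>
    obtain rfl : p = 1 - (1 - p₁) * (1 - p₂) := by linarith
    simp only [bernoulliExp_insert _ he, bernoulliExp_add, bernoulliExp_const_mul, ih,
      Finset.union_insert, Finset.insert_union, Finset.insert_idem]
    ring

lemma bernoulliProb_le_of_union (hp₁ : p₁ ∈ Set.Icc 0 1) (hp₂ : p₂ ∈ Set.Icc 0 1)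
    (h : 1 - p = (1 - p₁) * (1 - p₂)) {P P' P₁ : Finset α → Prop}
    {Q : Finset α → Finset α → Prop} {q : ℝ}
    (hP : ∀ s ⊆ E, ∀ t ⊆ E, P (s ∪ t) → P' (s ∪ t) ∨ P₁ s ∨ Q s t)
    (hQ : ∀ s ⊆ E, bernoulliProb p₂ E (Q s) ≤ q) :
    bernoulliProb p E P ≤ bernoulliProb p E P' + bernoulliProb p₁ E P₁ + q := by
  have hpt : ∀ s ⊆ E, ∀ t ⊆ E, (if P (s ∪ t) then (1 : ℝ) else 0) ≤
      ((if P' (s ∪ t) then 1 else 0) + if P₁ s then 1 else 0) + if Q s t then 1 else 0 := by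
    intro s hs t ht
    have := hP s hs t ht
    split_ifs <;> first | tauto | norm_num
  have hinner : ∀ s ⊆ E, (bernoulliExp p₂ E fun t => if P (s ∪ t) then (1 : ℝ) else 0) ≤
      ((bernoulliExp p₂ E fun t => if P' (s ∪ t) then (1 : ℝ) else 0) + if P₁ s then 1 else 0)
        + q := by
    intro s hs
    refine (bernoulliExp_mono hp₂ (hpt s hs)).trans ?_
    rw [bernoulliExp_add, bernoulliExp_add, bernoulliExp_const]
    exact add_le_add_right (hQ s hs) _
  rw [bernoulliProb, bernoulliExp_union h]
  refine (bernoulliExp_mono hp₁ hinner).trans_eq ?_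
  rw [bernoulliExp_add, bernoulliExp_add, bernoulliExp_const]
  simp only [bernoulliProb, bernoulliExp_union h]

end Union

section Independence

variable [DecidableEq α]

/-- On subsets of `E`, the value of `F` does not depend on whether `e` is a member. -/
def Ignores (E : Finset α) (e : α) (F : Finset α → β) : Prop := ∀ s ⊆ E, F (insert e s) = F s

/-- Each element of `E` is ignored by `F` or by `F'`: the elementary form of independence of
functions of a Bernoulli random subset of `E`. -/
def DependDisjointly {γ : Type*} (E : Finset α) (F : Finset α → β) (F' : Finset α → γ) : Prop :=
  ∀ e ∈ E, Ignores E e F ∨ Ignores E e F'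

lemma Ignores.comp {γ : Type*} {e : α} {F : Finset α → β} (h : Ignores E e F) (g : β → γ) :
    Ignores E e fun s => g (F s) := fun s hs => congrArg g (h s hs)

lemma Ignores.mono {E' : Finset α} {e : α} {F : Finset α → β} (h : Ignores E e F) (hE : E' ⊆ E) :
    Ignores E' e F := fun s hs => h s (hs.trans hE)

lemma Ignores.comp_insert {a e : α} {F : Finset α → β} (h : Ignores (insert a E) e F) :
    Ignores E e fun s => F (insert a s) := fun s hs => by
  simp only [Finset.insert_comm a e, h _ (Finset.insert_subset_insert a hs)]

lemma ignores_of_ne {a e : α} (h : e ≠ a) (E : Finset α) : Ignores E e fun s => a ∈ s :=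
  fun s _ => by simp only [Finset.mem_insert, h.symm, false_or]

lemma ignores_of_notMem {e : α} {T : Finset α} (h : e ∉ T) (E : Finset α) :
    Ignores E e fun s => T ⊆ s :=
  fun s _ => by simp only [Finset.subset_insert_iff_of_notMem h]

lemma DependDisjointly.bernoulliExp_mul (p : ℝ) {F F' : Finset α → ℝ}
    (h : DependDisjointly E F F') :
    bernoulliExp p E (fun s => F s * F' s) = bernoulliExp p E F * bernoulliExp p E F' := by
  induction E using Finset.induction_on generalizing F F' with
  | empty => simp only [bernoulliExp_empty]
  | insert e E he ih =>
    have hsub : E ⊆ insert e E := Finset.subset_insert e E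
    have hE : DependDisjointly E F F' := fun a ha =>
      (h a (hsub ha)).imp (·.mono hsub) (·.mono hsub)
    simp only [bernoulliExp_insert p he]
    rw [ih hE]
    rcases h e (Finset.mem_insert_self e E) with hF | hF'
    · have hcongr : ∀ G : Finset α → ℝ, bernoulliExp p E (fun s => F (insert e s) * G s)
          = bernoulliExp p E fun s => F s * G s := fun G =>
        bernoulliExp_congr fun s hs => by rw [hF s (hs.trans hsub)]
      rw [hcongr, bernoulliExp_congr fun s hs => hF s (hs.trans hsub),
        ih fun a ha => (h a (hsub ha)).imp (·.mono hsub) (·.comp_insert)]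
      ring
    · have hcongr : ∀ G : Finset α → ℝ, bernoulliExp p E (fun s => G s * F' (insert e s))
          = bernoulliExp p E fun s => G s * F' s := fun G =>
        bernoulliExp_congr fun s hs => by rw [hF' s (hs.trans hsub)]
      rw [hcongr, bernoulliExp_congr fun s hs => hF' s (hs.trans hsub),
        ih fun a ha => (h a (hsub ha)).imp (·.comp_insert) (·.mono hsub)]
      ring

lemma DependDisjointly.bernoulliProb_and (p : ℝ) {P Q : Finset α → Prop}
    (h : DependDisjointly E P Q) :
    bernoulliProb p E (fun s => P s ∧ Q s) = bernoulliProb p E P * bernoulliProb p E Q := by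
  have hind : DependDisjointly E (fun s => if P s then (1 : ℝ) else 0)
      (fun s => if Q s then (1 : ℝ) else 0) := fun e he =>
    (h e he).imp (·.comp fun q => if q then 1 else 0) (·.comp fun q => if q then 1 else 0)
  simp only [bernoulliProb]
  rw [← hind.bernoulliExp_mul]
  refine bernoulliExp_congr fun s _ => ?_
  by_cases hP : P s <;> simp [hP]

lemma bernoulliProb_forall_mem (p : ℝ) {I : Finset ι} {P : ι → Finset α → Prop}
    (h : (I : Set ι).Pairwise fun i j => DependDisjointly E (P i) (P j)) :
    bernoulliProb p E (fun s => ∀ i ∈ I, P i s) = ∏ i ∈ I, bernoulliProb p E (P i) := by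
  induction I using Finset.induction_on with
  | empty => simp [bernoulliProb, bernoulliExp_const]
  | insert i I hi ih =>
    rw [Finset.coe_insert, Set.pairwise_insert_of_notMem (by simpa using hi)] at h
    have hind : DependDisjointly E (P i) fun s => ∀ j ∈ I, P j s := by
      intro e he
      refine or_iff_not_imp_left.2 fun hPi s hs => ?_
      exact propext (forall₂_congr fun j hj =>
        (((h.2 j hj).1 e he).resolve_left hPi s hs).to_iff)
    rw [Finset.prod_insert hi, ← ih h.1, ← hind.bernoulliProb_and]
    simp only [Finset.forall_mem_insert]

end Independence

lemma bernoulliProb_mem (p : ℝ) {e : α} (he : e ∈ E) :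
    bernoulliProb p E (fun s => e ∈ s) = p := by
  have hmem : bernoulliProb p (E.erase e) (fun s => e ∈ s) = 0 :=
    (bernoulliExp_congr fun s hs => if_neg fun h => Finset.notMem_erase e E (hs h)).trans
      (bernoulliExp_const p 0 _)
  rw [bernoulliProb, ← Finset.insert_erase he,
    bernoulliExp_insert p (Finset.notMem_erase e E), ← bernoulliProb, hmem]
  simp [bernoulliExp_const]

lemma bernoulliProb_subset (p : ℝ) {T : Finset α} (hT : T ⊆ E) :
    bernoulliProb p E (fun s => T ⊆ s) = p ^ T.card := by
  simp only [Finset.subset_iff]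
  rw [bernoulliProb_forall_mem p, Finset.prod_congr rfl fun e he => bernoulliProb_mem p (hT he),
    Finset.prod_const]
  intro a _ b _ hab e _
  by_cases hea : e = a
  · exact Or.inr (ignores_of_ne (hea ▸ hab) E)
  · exact Or.inl (ignores_of_ne hea E)

lemma bernoulliProb_forall_not_subset_le (hp : p ∈ Set.Icc 0 1) {L : ℕ} {I : Finset ι}
    {T : ι → Finset α} (hT : ∀ i ∈ I, T i ⊆ E ∧ (T i).card ≤ L)
    (hdisj : (I : Set ι).PairwiseDisjoint T) :
    bernoulliProb p E (fun s => ∀ i ∈ I, ¬ T i ⊆ s) ≤ (1 - p ^ L) ^ I.card := by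
  rw [bernoulliProb_forall_mem p, ← Finset.prod_const]
  · refine Finset.prod_le_prod (fun i _ => bernoulliProb_nonneg hp E _) fun i hi => ?_
    rw [bernoulliProb_not, bernoulliProb_subset p (hT i hi).1]
    exact sub_le_sub_left (pow_le_pow_of_le_one hp.1 hp.2 (hT i hi).2) 1
  · intro i hi j hj hij e _
    by_cases he : e ∈ T i
    · exact Or.inr
        ((ignores_of_notMem (Finset.disjoint_left.1 (hdisj hi hj hij) he) E).comp Not)
    · exact Or.inl ((ignores_of_notMem he E).comp Not)

section Concentration

lemma exp_le_one_add_add_sq {x : ℝ} (hx : |x| ≤ 1) : Real.exp x ≤ 1 + x + x ^ 2 := by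
  linarith [(abs_le.1 (Real.abs_exp_sub_one_sub_id_le hx)).2]

lemma two_point_exp_le_of_mean_zero {x y C : ℝ} (hp : p ∈ Set.Icc 0 1)
    (hmean : (1 - p) * x + p * y = 0) (hxy : |y - x| ≤ C) (hC : C ≤ 1) :
    (1 - p) * Real.exp x + p * Real.exp y ≤ Real.exp (C ^ 2) := by
  obtain ⟨hp0, hp1⟩ := hp
  have hexp : ∀ z : ℝ, |z| ≤ |y - x| → Real.exp z ≤ 1 + z + C ^ 2 := fun z hz => by
    have hsq : z ^ 2 ≤ C ^ 2 := sq_le_sq.2 ((hz.trans hxy).trans (le_abs_self C))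
    linarith [exp_le_one_add_add_sq (hz.trans (hxy.trans hC))]
  have hx : |x| ≤ |y - x| := by
    rw [show x = -(p * (y - x)) by linarith, abs_neg, abs_mul, abs_of_nonneg hp0,
      show y - -(p * (y - x)) = y - x by linarith]
    exact mul_le_of_le_one_left (abs_nonneg _) hp1
  have hy : |y| ≤ |y - x| := by
    rw [show y = (1 - p) * (y - x) by linarith, abs_mul, abs_of_nonneg (sub_nonneg.2 hp1),
      show (1 - p) * (y - x) - x = y - x by linarith]
    exact mul_le_of_le_one_left (abs_nonneg _) (by linarith)
  calc (1 - p) * Real.exp x + p * Real.exp y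
      ≤ (1 - p) * (1 + x + C ^ 2) + p * (1 + y + C ^ 2) := by
        gcongr
        exacts [hexp x hx, hexp y hy]
    _ = C ^ 2 + 1 := by linear_combination hmean
    _ ≤ Real.exp (C ^ 2) := Real.add_one_le_exp _

lemma two_point_exp_le {x y C : ℝ} (hp : p ∈ Set.Icc 0 1) (hxy : |y - x| ≤ C) (hC : C ≤ 1) :
    (1 - p) * Real.exp x + p * Real.exp y ≤ Real.exp ((1 - p) * x + p * y + C ^ 2) := by
  set m := (1 - p) * x + p * y
  have hcentred := two_point_exp_le_of_mean_zero (x := x - m) (y := y - m) hp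
    (by simp only [m]; ring) (by rwa [sub_sub_sub_cancel_right]) hC
  rw [Real.exp_sub, Real.exp_sub, ← mul_div_assoc, ← mul_div_assoc, ← add_div,
    div_le_iff₀ (Real.exp_pos m), ← Real.exp_add] at hcentred
  rwa [add_comm m]

variable [DecidableEq α] {C : ℝ} {f : Finset α → ℝ}

lemma bernoulliExp_exp_le (hp : p ∈ Set.Icc 0 1) (hC : C ≤ 1)
    (hf : ∀ e ∈ E, ∀ s ⊆ E, |f (insert e s) - f s| ≤ C) :
    bernoulliExp p E (fun s => Real.exp (f s))
      ≤ Real.exp (bernoulliExp p E f + C ^ 2 * E.card) := by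
  induction E using Finset.induction_on generalizing f with
  | empty => simp [bernoulliExp_empty]
  | insert e E he ih =>
    have hsub : E ⊆ insert e E := Finset.subset_insert e E
    set g : Finset α → ℝ := fun s => (1 - p) * f s + p * f (insert e s) + C ^ 2 with hg
    have hg_diff : ∀ a ∈ E, ∀ s ⊆ E, |g (insert a s) - g s| ≤ C := by
      intro a ha s hs
      have h₁ := hf a (hsub ha) s (hs.trans hsub)
      have h₂ := hf a (hsub ha) (insert e s) (Finset.insert_subset_insert e hs)
      rw [Finset.insert_comm] at h₂
      rw [abs_le] at h₁ h₂ ⊢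
      simp only [hg]
      constructor <;> nlinarith [hp.1, hp.2]
    have hg_mean : bernoulliExp p E g = bernoulliExp p (insert e E) f + C ^ 2 := by
      rw [bernoulliExp_insert p he, bernoulliExp_add, bernoulliExp_add, bernoulliExp_const_mul,
        bernoulliExp_const_mul, bernoulliExp_const]
    calc bernoulliExp p (insert e E) (fun s => Real.exp (f s))
        = bernoulliExp p E (fun s => (1 - p) * Real.exp (f s)
            + p * Real.exp (f (insert e s))) := by
          rw [bernoulliExp_insert p he, bernoulliExp_add, bernoulliExp_const_mul,
            bernoulliExp_const_mul]
      _ ≤ bernoulliExp p E (fun s => Real.exp (g s)) :=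
          bernoulliExp_mono hp fun s hs =>
            two_point_exp_le hp (hf e (Finset.mem_insert_self e E) s (hs.trans hsub)) hC
      _ ≤ Real.exp (bernoulliExp p E g + C ^ 2 * E.card) := ih hg_diff
      _ = Real.exp (bernoulliExp p (insert e E) f + C ^ 2 * (insert e E).card) := by
          rw [hg_mean, Finset.card_insert_of_notMem he]
          push_cast
          ring_nf

lemma bernoulliProb_deviation_le (hp : p ∈ Set.Icc 0 1)
    (hf : ∀ e ∈ E, ∀ s ⊆ E, |f (insert e s) - f s| ≤ C) {l : ℝ} (hl : 0 ≤ l)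
    (hlC : l * C ≤ 1) (a : ℝ) :
    bernoulliProb p E (fun s => bernoulliExp p E f + a ≤ f s)
      ≤ Real.exp (-l * a + (l * C) ^ 2 * E.card) := by
  set μ := bernoulliExp p E f
  have hmgf : bernoulliExp p E (fun s => Real.exp (l * f s)) ≤
      Real.exp (l * μ + (l * C) ^ 2 * E.card) := by
    rw [← bernoulliExp_const_mul]
    refine bernoulliExp_exp_le hp hlC fun e he s hs => ?_
    rw [← mul_sub, abs_mul, abs_of_nonneg hl]
    exact mul_le_mul_of_nonneg_left (hf e he s hs) hl
  have hmarkov : ∀ s, (if μ + a ≤ f s then (1 : ℝ) else 0) ≤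
      Real.exp (-l * (μ + a)) * Real.exp (l * f s) := fun s => by
    rw [← Real.exp_add]
    split_ifs with h
    · exact Real.one_le_exp (by nlinarith)
    · positivity
  calc bernoulliProb p E (fun s => μ + a ≤ f s)
      ≤ Real.exp (-l * (μ + a)) * bernoulliExp p E (fun s => Real.exp (l * f s)) := by
        rw [← bernoulliExp_const_mul]
        exact bernoulliExp_mono hp fun s _ => hmarkov s
    _ ≤ Real.exp (-l * (μ + a)) * Real.exp (l * μ + (l * C) ^ 2 * E.card) := by gcongr
    _ = Real.exp (-l * a + (l * C) ^ 2 * E.card) := by rw [← Real.exp_add]; ring_nf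

universe u

lemma exists_bernoulliProb_deviation_le {C K τ : ℝ} (hC : 0 < C) (hK : 0 ≤ K) (hτ : 0 < τ) :
    ∃ γ > 0, ∀ {α : Type u} [DecidableEq α] {p n : ℝ} {E : Finset α} {f : Finset α → ℝ},
      p ∈ Set.Icc 0 1 → 0 ≤ n → E.card ≤ K * n →
      (∀ e ∈ E, ∀ s ⊆ E, |f (insert e s) - f s| ≤ C) →
      bernoulliProb p E (fun s => bernoulliExp p E f + τ * n ≤ f s) ≤ Real.exp (-γ * n) := by
  set l : ℝ := min (1 / C) (τ / (2 * C ^ 2 * (K + 1)))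
  have hl : 0 < l := by positivity
  have hlC : l * C ≤ 1 := by
    calc l * C ≤ 1 / C * C := by gcongr; exact min_le_left _ _
      _ = 1 := by field_simp
  have hlK : l * C ^ 2 * K ≤ τ / 2 := by
    calc l * C ^ 2 * K ≤ τ / (2 * C ^ 2 * (K + 1)) * C ^ 2 * (K + 1) := by
          gcongr
          exacts [min_le_right _ _, le_add_of_nonneg_right zero_le_one]
      _ = τ / 2 := by field_simp
  refine ⟨l * τ / 2, by positivity, fun {α} _ {p n E f} hp hn hE hf =>
    (bernoulliProb_deviation_le hp hf hl.le hlC _).trans (Real.exp_le_exp.2 ?_)⟩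
  calc -l * (τ * n) + (l * C) ^ 2 * E.card ≤ -l * (τ * n) + (l * C) ^ 2 * (K * n) := by gcongr
    _ = -l * (τ * n) + l * (l * C ^ 2 * K) * n := by ring
    _ ≤ -l * (τ * n) + l * (τ / 2) * n := by gcongr
    _ = -(l * τ / 2) * n := by ring

end Concentration

end RandomSubset

section BranchSurvival

open Filter Topology

variable {m : ℕ} {p x y : ℝ}

/-- Probability that at least one of `m` independent events of the form "an edge is open and,
independently, its far end survives" occurs, when these two have probabilities `p` and `x`. -/
def survivalStep (m : ℕ) (p x : ℝ) : ℝ := 1 - (1 - p * x) ^ m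

/-- Probability that in bond percolation on the rooted `m`-ary tree the root is joined to
depth `r`. -/
def branchProb (m : ℕ) (p : ℝ) : ℕ → ℝ
  | 0 => 1
  | r + 1 => survivalStep m p (branchProb m p r)

/-- Probability that in bond percolation on the rooted `m`-ary tree the root lies in an infinite
component. -/
def survivalProb (m : ℕ) (p : ℝ) : ℝ := ⨅ r, branchProb m p r

/-- Probability that in bond percolation on the `d`-regular tree a given vertex is joined to
distance `r + 1`. -/
def rootProb (d : ℕ) (p : ℝ) (r : ℕ) : ℝ := survivalStep d p (branchProb (d - 1) p r)

lemma survivalStep_mem_Icc (hp : p ∈ Set.Icc 0 1) (hx : x ∈ Set.Icc 0 1) (m : ℕ) :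
    survivalStep m p x ∈ Set.Icc (0 : ℝ) 1 := by
  have hpx : p * x ∈ Set.Icc (0 : ℝ) 1 :=
    ⟨mul_nonneg hp.1 hx.1, mul_le_one₀ hp.2 hx.1 hx.2⟩
  exact ⟨sub_nonneg.2 (pow_le_one₀ (sub_nonneg.2 hpx.2) (sub_le_self 1 hpx.1)),
    sub_le_self 1 (pow_nonneg (sub_nonneg.2 hpx.2) m)⟩

lemma survivalStep_le_survivalStep (hp : p ∈ Set.Icc 0 1) (hxy : x ≤ y) (hy : y ≤ 1) (m : ℕ) :
    survivalStep m p x ≤ survivalStep m p y := by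
  have hpy : 0 ≤ 1 - p * y := by nlinarith [hp.1, hp.2]
  exact sub_le_sub_left (pow_le_pow_left₀ hpy
    (sub_le_sub_left (mul_le_mul_of_nonneg_left hxy hp.1) 1) m) 1

lemma continuous_survivalStep (m : ℕ) (p : ℝ) : Continuous (survivalStep m p) := by
  unfold survivalStep
  fun_prop

lemma continuous_survivalStep_left (m : ℕ) (x : ℝ) : Continuous fun p => survivalStep m p x := by
  unfold survivalStep
  fun_prop

lemma branchProb_mem_Icc (hp : p ∈ Set.Icc 0 1) (m r : ℕ) :
    branchProb m p r ∈ Set.Icc (0 : ℝ) 1 := by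
  induction r with
  | zero => exact ⟨zero_le_one, le_rfl⟩
  | succ r ih => exact survivalStep_mem_Icc hp ih m

lemma branchProb_antitone (hp : p ∈ Set.Icc 0 1) (m : ℕ) : Antitone (branchProb m p) := by
  refine antitone_nat_of_succ_le fun r => ?_
  induction r with
  | zero => exact (branchProb_mem_Icc hp m 1).2
  | succ r ih => exact survivalStep_le_survivalStep hp ih (branchProb_mem_Icc hp m r).2 m

lemma le_branchProb_of_le_survivalStep (hp : p ∈ Set.Icc 0 1) (hy : y ≤ 1)
    (hstep : y ≤ survivalStep m p y) (r : ℕ) : y ≤ branchProb m p r := by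
  induction r with
  | zero => exact hy
  | succ r ih =>
    exact hstep.trans (survivalStep_le_survivalStep hp ih (branchProb_mem_Icc hp m r).2 m)

lemma tendsto_branchProb (hp : p ∈ Set.Icc 0 1) (m : ℕ) :
    Tendsto (branchProb m p) atTop (𝓝 (survivalProb m p)) :=
  tendsto_atTop_ciInf (branchProb_antitone hp m)
    ⟨0, Set.forall_mem_range.2 fun r => (branchProb_mem_Icc hp m r).1⟩

lemma survivalProb_le_one (hp : p ∈ Set.Icc 0 1) (m : ℕ) : survivalProb m p ≤ 1 :=
  le_of_tendsto' (tendsto_branchProb hp m) fun r => (branchProb_mem_Icc hp m r).2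

lemma survivalStep_survivalProb (hp : p ∈ Set.Icc 0 1) (m : ℕ) :
    survivalStep m p (survivalProb m p) = survivalProb m p :=
  tendsto_nhds_unique (((continuous_survivalStep m p).tendsto _).comp (tendsto_branchProb hp m))
    ((tendsto_branchProb hp m).comp (tendsto_add_atTop_nat 1))

/- Strict concavity of `survivalStep m p`, which also vanishes at `0`, between `0` and a fixed
point. -/
lemma lt_survivalStep_of_lt_fixed (hp : p ∈ Set.Ioo 0 1) (hy : 0 < y) (hyx : y < x) (hx : x ≤ 1)
    (hfix : survivalStep m p x = x) : y < survivalStep m p y := by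
  obtain ⟨hp0, hp1⟩ := hp
  have hx0 : 0 < x := hy.trans hyx
  unfold survivalStep at hfix ⊢
  have hm : 2 ≤ m := by
    by_contra! hm
    interval_cases m <;> nlinarith
  have hpx : 0 ≤ 1 - p * x := by nlinarith
  have hconv := (strictConvexOn_pow hm).2 (Set.mem_Ici.2 (zero_le_one' ℝ)) (Set.mem_Ici.2 hpx)
    (by nlinarith [mul_pos hp0 hx0]) (sub_pos.2 ((div_lt_one hx0).2 hyx)) (div_pos hy hx0)
    (sub_add_cancel _ _)
  simp only [smul_eq_mul, one_pow, mul_one] at hconv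
  have hpoint : 1 - y / x + y / x * (1 - p * x) = 1 - p * y := by field_simp; ring
  have hvalue : 1 - y / x + y / x * (1 - x) = 1 - y := by field_simp; ring
  rw [hpoint, show (1 - p * x) ^ m = 1 - x by linarith, hvalue] at hconv
  linarith

lemma eventually_le_branchProb (hp : p ∈ Set.Ioo 0 1) (hy : y < survivalProb m p) :
    ∀ᶠ q in 𝓝[<] p, ∀ r, y ≤ branchProb m q r := by
  have hp' : p ∈ Set.Icc 0 1 := Set.Ioo_subset_Icc_self hp
  have hIcc : ∀ᶠ q in 𝓝[<] p, q ∈ Set.Icc (0 : ℝ) 1 :=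
    nhdsWithin_le_nhds (Icc_mem_nhds hp.1 hp.2)
  rcases le_or_gt y 0 with hy0 | hy0
  · filter_upwards [hIcc] with q hq r using hy0.trans (branchProb_mem_Icc hq m r).1
  · have hlt := lt_survivalStep_of_lt_fixed hp hy0 hy (survivalProb_le_one hp' m)
      (survivalStep_survivalProb hp' m)
    have hnear : ∀ᶠ q in 𝓝[<] p, y < survivalStep m q y :=
      nhdsWithin_le_nhds (((continuous_survivalStep_left m y).tendsto p).eventually_const_lt hlt)
    filter_upwards [hIcc, hnear] with q hq hqy using
      le_branchProb_of_le_survivalStep hq (hy.le.trans (survivalProb_le_one hp' m)) hqy.le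

lemma exists_rootProb_sub_le (d : ℕ) {τ : ℝ} (hp : p ∈ Set.Ioo 0 1) (hτ : 0 < τ) :
    ∃ p' ∈ Set.Ioo 0 p, ∀ᶠ r in atTop, rootProb d p r - rootProb d p' r ≤ τ := by
  have hp' : p ∈ Set.Icc 0 1 := Set.Ioo_subset_Icc_self hp
  set X := survivalProb (d - 1) p
  set θ := survivalStep d p X
  have hupper : ∀ᶠ r in atTop, rootProb d p r < θ + τ / 2 :=
    (((continuous_survivalStep d p).tendsto X).comp
      (tendsto_branchProb hp' (d - 1))).eventually_lt_const (by linarith)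
  have hlower : ∀ᶠ y in 𝓝[<] X, θ - τ / 2 < survivalStep d p y :=
    nhdsWithin_le_nhds
      (((continuous_survivalStep d p).tendsto X).eventually_const_lt (by linarith))
  obtain ⟨y, hyθ, hyX⟩ := (hlower.and self_mem_nhdsWithin).exists
  have hnear : ∀ᶠ q in 𝓝[<] p, θ - τ / 2 < survivalStep d q y :=
    nhdsWithin_le_nhds (((continuous_survivalStep_left d y).tendsto p).eventually_const_lt hyθ)
  obtain ⟨p', hstep, hbranch, hp'p⟩ := (hnear.and
    ((eventually_le_branchProb hp hyX).and (Ioo_mem_nhdsLT hp.1))).exists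
  have hp'I : p' ∈ Set.Icc 0 1 := ⟨hp'p.1.le, (hp'p.2.trans hp.2).le⟩
  refine ⟨p', hp'p, hupper.mono fun r hr => ?_⟩
  have hroot : survivalStep d p' y ≤ rootProb d p' r :=
    survivalStep_le_survivalStep hp'I (hbranch r) (branchProb_mem_Icc hp'I _ r).2 d
  linarith

end BranchSurvival

section NonbacktrackingWalks

open SimpleGraph

variable {W : Type*} {G H H' : SimpleGraph W} {e : Sym2 W} {r k R : ℕ} {ρ u v w x : W}

/-- The graph spanned by a finite set of edges. -/
abbrev edgeGraph (s : Finset (Sym2 W)) : SimpleGraph W := fromEdgeSet ↑s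

/-- Some walk of length `r` in `H` starting at `v` never immediately reverses an edge and does not
step to `u` first; `u = v` puts no restriction on the first step. -/
def Descends (H : SimpleGraph W) : ℕ → W → W → Prop
  | 0, _, _ => True
  | r + 1, u, v => ∃ w, H.Adj v w ∧ w ≠ u ∧ Descends H r v w

/-- The edge `e` lies on one of the walks in `G` considered by `Descends G r u v`. -/
def Influences (G : SimpleGraph W) (e : Sym2 W) : ℕ → W → W → Prop
  | 0, _, _ => False
  | r + 1, u, v => ∃ w, G.Adj v w ∧ w ≠ u ∧ (e = s(v, w) ∨ Influences G e r v w)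

/-- The vertex `v` is at distance `k` from the root `ρ`, and `u` is a neighbour of `v` at distance
`k - 1`; at the root itself, `u = v`. -/
def AtLevel (G : SimpleGraph W) (ρ : W) (k : ℕ) (u v : W) : Prop :=
  G.Reachable ρ v ∧ G.dist ρ v = k ∧
    ((k = 0 ∧ u = v) ∨ (G.Adj u v ∧ G.Reachable ρ u ∧ G.dist ρ u + 1 = k))

lemma Descends.mono (hH : H ≤ H') (h : Descends H r u v) : Descends H' r u v := by
  induction r generalizing u v with
  | zero => trivial
  | succ r ih =>
    obtain ⟨w, hvw, hwu, hw⟩ := h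
    exact ⟨w, hH hvw, hwu, ih hw⟩

lemma Descends.of_isPath (q : H.Walk v x) (hq : q.IsPath) (hu : u ∉ q.support.tail)
    (hr : r ≤ q.length) : Descends H r u v := by
  induction q generalizing u r with
  | nil =>
    obtain rfl : r = 0 := Nat.le_zero.1 hr
    trivial
  | @cons v w x hvw q ih =>
    cases r with
    | zero => trivial
    | succ r =>
      rw [Walk.cons_isPath_iff] at hq
      rw [Walk.support_cons, List.tail_cons] at hu
      exact ⟨w, hvw, fun hwu => hu (hwu ▸ q.start_mem_support),
        ih hq.1 (fun hv => hq.2 (List.mem_of_mem_tail hv)) (Nat.le_of_succ_le_succ hr)⟩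

lemma exists_walk_notMem_support (hwv : G.Adj w v) (hw : G.Reachable ρ w)
    (hle : G.dist ρ w ≤ G.dist ρ v) :
    ∃ q : G.Walk ρ w, q.length = G.dist ρ w ∧ v ∉ q.support := by
  obtain ⟨q, hq⟩ := hw.exists_walk_length_eq_dist
  refine ⟨q, hq, fun hv => ?_⟩
  have hshort := Walk.length_takeUntil_lt_length hv hwv.ne'
  have hdist := dist_le (q.takeUntil v hv)
  omega

lemma girth_le_of_adj_of_dist_le (huv : G.Adj u v) (hwv : G.Adj w v) (huw : u ≠ w)
    (hu : G.Reachable ρ u) (hw : G.Reachable ρ w) (hdu : G.dist ρ u ≤ G.dist ρ v)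
    (hdw : G.dist ρ w ≤ G.dist ρ v) : G.girth ≤ G.dist ρ u + G.dist ρ w + 2 := by
  obtain ⟨q₁, hl₁, hv₁⟩ := exists_walk_notMem_support huv hu hdu
  obtain ⟨q₂, hl₂, hv₂⟩ := exists_walk_notMem_support hwv hw hdw
  set q := (q₁.reverse.append q₂).concat hwv with hq
  have hedge : s(v, u) ∉ q.edges := by
    intro h
    rw [hq, Walk.edges_concat, List.concat_eq_append, List.mem_append] at h
    rcases h with h | h
    · have hsupport := Walk.fst_mem_support_of_mem_edges _ h
      simp [Walk.mem_support_append_iff, hv₁, hv₂] at hsupport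
    · rw [List.mem_singleton, Sym2.eq_swap, Sym2.congr_left] at h
      exact huw h
  have hcycle : (Walk.cons huv.symm q.bypass).IsCycle :=
    (Walk.cons_isCycle_iff _ _).2 ⟨q.bypass_isPath, fun h => hedge (q.edges_bypass_subset_edges h)⟩
  calc G.girth ≤ (Walk.cons huv.symm q.bypass).length :=
        ENat.toNat_le_of_le_natCast (egirth_le_length hcycle)
    _ ≤ q.length + 1 := Nat.succ_le_succ q.length_bypass_le_length
    _ = G.dist ρ u + G.dist ρ w + 2 := by simp [hq, hl₁, hl₂]

lemma atLevel_root : AtLevel G ρ 0 ρ ρ := ⟨.refl _, dist_self, Or.inl ⟨rfl, rfl⟩⟩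

lemma AtLevel.step (hg : 2 * R < G.girth) (h : AtLevel G ρ k u v) (hk : k < R)
    (hvw : G.Adj v w) (hwu : w ≠ u) : AtLevel G ρ (k + 1) v w := by
  obtain ⟨hv, hdv, hparent⟩ := h
  have hw : G.Reachable ρ w := hv.trans hvw.reachable
  refine ⟨hw, ?_, Or.inr ⟨hvw, hv, by omega⟩⟩
  have hdw : G.dist ρ w ≤ k + 1 := by
    obtain ⟨q, hq⟩ := hv.exists_walk_length_eq_dist
    have hconcat := dist_le (q.concat hvw)
    rw [Walk.length_concat] at hconcat
    omega
  by_contra hne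
  rcases hparent with ⟨rfl, rfl⟩ | ⟨huv, hu, hdu⟩
  · exact hwu ((hw.dist_eq_zero_iff.1 (by omega)).symm.trans (hv.dist_eq_zero_iff.1 hdv))
  · have := girth_le_of_adj_of_dist_le huv hvw.symm hwu.symm hu hw (by omega) (by omega)
    omega

lemma Influences.le_dist (hg : 2 * R < G.girth) (h : AtLevel G ρ k u v) (hk : k + r ≤ R)
    (he : Influences G e r u v) : ∀ x ∈ e, k ≤ G.dist ρ x := by
  induction r generalizing u v k with
  | zero => exact he.elim
  | succ r ih =>
    obtain ⟨w, hvw, hwu, he⟩ := he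
    have hw := h.step hg (by omega) hvw hwu
    rcases he with rfl | he
    · have := h.2.1
      have := hw.2.1
      rintro x hx
      rcases Sym2.mem_iff.1 hx with rfl | rfl <;> omega
    · exact fun x hx => (Nat.le_succ k).trans (ih hw (by omega) he x hx)

lemma AtLevel.not_influences_parent (hg : 2 * R < G.girth) (h : AtLevel G ρ (k + 1) v w)
    (hk : k + 1 + r ≤ R) (x : W) : ¬ Influences G s(v, x) r v w := by
  intro he
  have hle := he.le_dist hg h hk v (Sym2.mem_mk_left v x)
  obtain ⟨hk0, -⟩ | ⟨-, -, hdist⟩ := h.2.2 <;> omega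

lemma Influences.not_influences (hg : 2 * R < G.girth) {u' v' : W} (h : AtLevel G ρ k u v)
    (h' : AtLevel G ρ k u' v') (hne : v ≠ v') (hk : k + r ≤ R) (he : Influences G e r u v) :
    ¬ Influences G e r u' v' := by
  induction r generalizing u v u' v' k with
  | zero => exact he.elim
  | succ r ih =>
    rintro ⟨w', hvw', hwu', he'⟩
    obtain ⟨w, hvw, hwu, he⟩ := he
    have hw := h.step hg (by omega) hvw hwu
    have hw' := h'.step hg (by omega) hvw' hwu'
    rcases he with rfl | he <;> rcases he' with he' | he'
    · rcases Sym2.eq_iff.1 he' with ⟨hv, -⟩ | ⟨rfl, -⟩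
      · exact hne hv
      · have := h.2.1
        have := hw'.2.1
        omega
    · have := he'.le_dist hg hw' (by omega) v (Sym2.mem_mk_left v w)
      have := h.2.1
      omega
    · have := he.le_dist hg hw (by omega) v' (he' ▸ Sym2.mem_mk_left v' w')
      have := h'.2.1
      omega
    · refine ih hw hw' ?_ (by omega) he he'
      rintro rfl
      have := girth_le_of_adj_of_dist_le hvw hvw' hne h.1 h'.1
        (by rw [h.2.1, hw.2.1]; omega) (by rw [h'.2.1, hw.2.1]; omega)
      rw [h.2.1, h'.2.1] at this
      omega

lemma Descends.exists_dist (hg : 2 * R < G.girth) (hH : H ≤ G) (hl : AtLevel G ρ k u v)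
    (hk : k + r ≤ R) (h : Descends H r u v) : ∃ x, H.Reachable v x ∧ G.dist ρ x = k + r := by
  induction r generalizing k u v with
  | zero => exact ⟨v, .refl _, hl.2.1⟩
  | succ r ih =>
    obtain ⟨w, hvw, hwu, hw⟩ := h
    obtain ⟨x, hx, hdist⟩ := ih (hl.step hg (by omega) (hH hvw) hwu) (by omega) hw
    exact ⟨x, hvw.reachable.trans hx, by omega⟩

end NonbacktrackingWalks

section SurvivalProbability

open SimpleGraph

variable {U : Type} [Fintype U] {G : SimpleGraph U} {e : Sym2 U} {s : Finset (Sym2 U)}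
  {d r k R : ℕ} {ρ u v w : U}

lemma mem_edgeFinset' : e ∈ edgeFinset' G ↔ e ∈ G.edgeSet := by
  rw [edgeFinset', Finset.mem_filter_univ]

lemma edgeGraph_adj (hs : s ⊆ edgeFinset' G) : (edgeGraph s).Adj v w ↔ s(v, w) ∈ s := by
  rw [fromEdgeSet_adj, Finset.mem_coe, and_iff_left_iff_imp]
  exact fun h => G.ne_of_adj (mem_edgeFinset'.1 (hs h))

lemma edgeGraph_le (hs : s ⊆ edgeFinset' G) : edgeGraph s ≤ G :=
  fun _ _ hvw => mem_edgeFinset'.1 (hs ((edgeGraph_adj hs).1 hvw))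

lemma ignores_descends (he : e ∈ edgeFinset' G) (h : ¬ Influences G e r u v) :
    Ignores (edgeFinset' G) e fun s => Descends (edgeGraph s) r u v := by
  intro s hs
  have hs' : insert e s ⊆ edgeFinset' G := Finset.insert_subset he hs
  suffices hiff : Descends (edgeGraph (insert e s)) r u v ↔ Descends (edgeGraph s) r u v from
    propext hiff
  induction r generalizing u v with
  | zero => rfl
  | succ r ih =>
    refine exists_congr fun w => ?_
    rw [edgeGraph_adj hs, edgeGraph_adj hs', Finset.mem_insert]
    by_cases hw : G.Adj v w ∧ w ≠ u
    · have hne : s(v, w) ≠ e := fun hvw => h ⟨w, hw.1, hw.2, Or.inl hvw.symm⟩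
      rw [or_iff_right hne, ih fun hw' => h ⟨w, hw.1, hw.2, Or.inr hw'⟩]
    · have hadj : s(v, w) = e ∨ s(v, w) ∈ s → G.Adj v w := fun hvw =>
        mem_edgeFinset'.1 (hs' (Finset.mem_insert.2 hvw))
      tauto

lemma ignores_open_branch (he : e ∈ edgeFinset' G) (hne : e ≠ s(v, w))
    (h : ¬ Influences G e r v w) :
    Ignores (edgeFinset' G) e fun s => s(v, w) ∈ s ∧ Descends (edgeGraph s) r v w :=
  fun s hs => congrArg₂ And (ignores_of_ne hne _ s hs) (ignores_descends he h s hs)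

lemma descends_succ_iff (hs : s ⊆ edgeFinset' G) :
    Descends (edgeGraph s) (r + 1) u v ↔
      ∃ w ∈ (G.neighborFinset v).erase u, s(v, w) ∈ s ∧ Descends (edgeGraph s) r v w := by
  refine exists_congr fun w => ?_
  have hadj : s(v, w) ∈ s → G.Adj v w := fun h => mem_edgeFinset'.1 (hs h)
  rw [edgeGraph_adj hs, Finset.mem_erase, mem_neighborFinset]
  tauto

lemma bernoulliProb_open_branch (hg : 2 * R < G.girth) (h : AtLevel G ρ (k + 1) v w)
    (hk : k + 1 + r ≤ R) (hvw : G.Adj v w) (p : ℝ) :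
    bernoulliProb p (edgeFinset' G) (fun s => s(v, w) ∈ s ∧ Descends (edgeGraph s) r v w)
      = p * bernoulliProb p (edgeFinset' G) fun s => Descends (edgeGraph s) r v w := by
  rw [DependDisjointly.bernoulliProb_and, bernoulliProb_mem p (mem_edgeFinset'.2 hvw)]
  intro e he
  by_cases hne : e = s(v, w)
  · exact Or.inr (ignores_descends he (hne ▸ h.not_influences_parent hg hk w))
  · exact Or.inl (ignores_of_ne hne _)

lemma dependDisjointly_open_branch (hg : 2 * R < G.girth) {w' : U}
    (h : AtLevel G ρ (k + 1) v w) (h' : AtLevel G ρ (k + 1) v w') (hne : w ≠ w')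
    (hk : k + 1 + r ≤ R) :
    DependDisjointly (edgeFinset' G)
      (fun s => s(v, w) ∈ s ∧ Descends (edgeGraph s) r v w)
      (fun s => s(v, w') ∈ s ∧ Descends (edgeGraph s) r v w') := by
  intro e he
  by_cases hw : e = s(v, w)
  · refine Or.inr (ignores_open_branch he ?_ (hw ▸ h'.not_influences_parent hg hk w))
    rwa [hw, Ne, Sym2.congr_right]
  · by_cases hinf : Influences G e r v w
    · refine Or.inr (ignores_open_branch he ?_ (hinf.not_influences hg h h' hne hk))
      rintro rfl
      exact h.not_influences_parent hg hk w' hinf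
    · exact Or.inl (ignores_open_branch he hw hinf)

lemma bernoulliProb_descends_succ (hg : 2 * R < G.girth) (h : AtLevel G ρ k u v)
    (hk : k + (r + 1) ≤ R) {p x : ℝ}
    (hx : ∀ w, AtLevel G ρ (k + 1) v w →
      bernoulliProb p (edgeFinset' G) (fun s => Descends (edgeGraph s) r v w) = x) :
    bernoulliProb p (edgeFinset' G) (fun s => Descends (edgeGraph s) (r + 1) u v)
      = survivalStep ((G.neighborFinset v).erase u).card p x := by
  set N := (G.neighborFinset v).erase u
  have hadj : ∀ w ∈ N, G.Adj v w := fun w hw =>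
    (G.mem_neighborFinset v w).1 (Finset.mem_of_mem_erase hw)
  have hlevel : ∀ w ∈ N, AtLevel G ρ (k + 1) v w := fun w hw =>
    h.step hg (by omega) (hadj w hw) (Finset.ne_of_mem_erase hw)
  have hfail : bernoulliProb p (edgeFinset' G) (fun s => ¬ Descends (edgeGraph s) (r + 1) u v)
      = ∏ _w ∈ N, (1 - p * x) := by
    rw [bernoulliProb_congr (Q := fun s => ∀ w ∈ N,
        ¬ (s(v, w) ∈ s ∧ Descends (edgeGraph s) r v w)) fun s hs => by
      simp only [descends_succ_iff hs, N, not_exists, not_and], bernoulliProb_forall_mem]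
    · refine Finset.prod_congr rfl fun w hw => ?_
      rw [bernoulliProb_not,
        bernoulliProb_open_branch hg (hlevel w hw) (by omega) (hadj w hw), hx w (hlevel w hw)]
    · intro w hw w' hw' hne e he
      exact (dependDisjointly_open_branch hg (hlevel w hw) (hlevel w' hw') hne (by omega)
        e he).imp (·.comp Not) (·.comp Not)
  rw [bernoulliProb_not, Finset.prod_const] at hfail
  rw [survivalStep, ← hfail, sub_sub_cancel]

lemma bernoulliProb_descends (hg : 2 * R < G.girth) (hreg : ∀ v, G.degree v = d) (p : ℝ)
    (h : AtLevel G ρ (k + 1) u v) (hk : k + 1 + r ≤ R) :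
    bernoulliProb p (edgeFinset' G) (fun s => Descends (edgeGraph s) r u v)
      = branchProb (d - 1) p r := by
  induction r generalizing k u v with
  | zero => simp [Descends, branchProb, bernoulliProb, bernoulliExp_const]
  | succ r ih =>
    obtain ⟨hk0, -⟩ | ⟨huv, -, -⟩ := h.2.2
    · omega
    · rw [bernoulliProb_descends_succ hg h (by omega) fun w hw => ih hw (by omega),
        Finset.card_erase_of_mem ((G.mem_neighborFinset v u).2 huv.symm),
        card_neighborFinset_eq_degree, hreg, branchProb]

lemma bernoulliProb_descends_root (hg : 2 * (r + 1) < G.girth) (hreg : ∀ v, G.degree v = d)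
    (p : ℝ) (v : U) :
    bernoulliProb p (edgeFinset' G) (fun s => Descends (edgeGraph s) (r + 1) v v)
      = rootProb d p r := by
  rw [bernoulliProb_descends_succ hg atLevel_root (by omega) fun w hw =>
      bernoulliProb_descends hg hreg p hw (by omega),
    Finset.erase_eq_of_notMem (G.notMem_neighborFinset_self v), card_neighborFinset_eq_degree,
    hreg, rootProb]

end SurvivalProbability

section NonbacktrackingSet

open SimpleGraph

variable {U : Type} [Fintype U] {G H H' : SimpleGraph U} {A : Finset U} {e : Sym2 U}
  {s : Finset (Sym2 U)} {d k r R : ℕ} {p : ℝ} {ρ u v w x : U}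

/-- The vertices joined to `A` by a walk in `G` of length at most `k`. -/
def nbhd (G : SimpleGraph U) (A : Finset U) (k : ℕ) : Finset U :=
  {v | ∃ u ∈ A, ∃ q : G.Walk u v, q.length ≤ k}

lemma mem_nbhd : v ∈ nbhd G A k ↔ ∃ u ∈ A, ∃ q : G.Walk u v, q.length ≤ k :=
  Finset.mem_filter_univ v

lemma subset_nbhd (G : SimpleGraph U) (A : Finset U) (k : ℕ) : A ⊆ nbhd G A k := fun v hv =>
  mem_nbhd.2 ⟨v, hv, Walk.nil, k.zero_le⟩

lemma nbhd_subset_nbhd_succ (G : SimpleGraph U) (A : Finset U) (k : ℕ) :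
    nbhd G A k ⊆ nbhd G A (k + 1) := fun _ hv =>
  let ⟨u, hu, q, hq⟩ := mem_nbhd.1 hv
  mem_nbhd.2 ⟨u, hu, q, hq.trans k.le_succ⟩

lemma mem_nbhd_succ_of_adj (hv : v ∈ nbhd G A k) (hvw : G.Adj v w) : w ∈ nbhd G A (k + 1) := by
  obtain ⟨u, hu, q, hq⟩ := mem_nbhd.1 hv
  exact mem_nbhd.2 ⟨u, hu, q.concat hvw, by rw [Walk.length_concat]; omega⟩

lemma nbhd_succ_subset (G : SimpleGraph U) (A : Finset U) (k : ℕ) :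
    nbhd G A (k + 1) ⊆ (nbhd G A k).biUnion fun v => insert v (G.neighborFinset v) := by
  intro w hw
  obtain ⟨u, hu, q, hq⟩ := mem_nbhd.1 hw
  rw [Finset.mem_biUnion]
  rcases Nat.lt_or_ge q.length (k + 1) with hlt | hge
  · exact ⟨w, mem_nbhd.2 ⟨u, hu, q, by omega⟩, Finset.mem_insert_self _ _⟩
  · have hnil : ¬ q.Nil := fun h => by
      have := Walk.length_eq_zero_iff.2 h
      omega
    refine ⟨q.penultimate, mem_nbhd.2 ⟨u, hu, q.dropLast, ?_⟩, Finset.mem_insert_of_mem ?_⟩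
    · rw [Walk.length_dropLast]
      omega
    · exact (G.mem_neighborFinset _ _).2 (q.adj_penultimate hnil)

lemma card_nbhd_le (hdeg : ∀ v, G.degree v ≤ d) (A : Finset U) (k : ℕ) :
    (nbhd G A k).card ≤ A.card * (d + 1) ^ k := by
  induction k with
  | zero =>
    rw [pow_zero, mul_one]
    refine Finset.card_le_card fun v hv => ?_
    obtain ⟨u, hu, q, hq⟩ := mem_nbhd.1 hv
    exact Walk.eq_of_length_eq_zero (Nat.le_zero.1 hq) ▸ hu
  | succ k ih =>
    calc (nbhd G A (k + 1)).card ≤ (nbhd G A k).card * (d + 1) :=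
          (Finset.card_le_card (nbhd_succ_subset G A k)).trans <|
            Finset.card_biUnion_le_card_mul _ _ _ fun v _ =>
              (Finset.card_insert_le _ _).trans (Nat.succ_le_succ (hdeg v))
      _ ≤ A.card * (d + 1) ^ (k + 1) := by
          rw [pow_succ, ← mul_assoc]
          exact Nat.mul_le_mul_right _ ih

/-- The vertex set of the connected component of `v` in `H`. -/
abbrev component (H : SimpleGraph U) (v : U) : Finset U := compVerts H (H.connectedComponentMk v)

lemma mem_component : w ∈ component H v ↔ H.Reachable v w := by
  rw [component, compVerts, Finset.mem_filter_univ, ConnectedComponent.eq, reachable_comm]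

lemma self_mem_component (H : SimpleGraph U) (v : U) : v ∈ component H v :=
  mem_component.2 (.refl v)

lemma component_eq_of_mem (h : w ∈ component H v) : component H w = component H v :=
  congrArg (compVerts H) (ConnectedComponent.sound (mem_component.1 h).symm)

lemma component_mono (h : H ≤ H') (v : U) : component H v ⊆ component H' v := fun _ hw =>
  mem_component.2 ((mem_component.1 hw).mono h)

/-- The vertices from which a non-backtracking walk of length `R` in `H` starts. This is a local
substitute for the 2-core, which it contains. -/
def descendSet (H : SimpleGraph U) (R : ℕ) : Finset U := {v | Descends H R v v}

lemma mem_descendSet : v ∈ descendSet H R ↔ Descends H R v v := Finset.mem_filter_univ v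

lemma descendSet_mono (h : H ≤ H') (R : ℕ) : descendSet H R ⊆ descendSet H' R := fun _ hv =>
  mem_descendSet.2 ((mem_descendSet.1 hv).mono h)

lemma support_twoCoreComp_subset_descendSet (H : SimpleGraph U) (c : H.ConnectedComponent)
    (R : ℕ) : (twoCoreComp H c).support ⊆ descendSet H R := by
  rintro v ⟨w, hvw⟩
  obtain ⟨K, ⟨hK, -, hdeg⟩, hadj⟩ := sSup_adj.1 hvw
  have hdescends : ∀ r u x, x ∈ K.support → Descends H r u x := by
    intro r
    induction r with
    | zero => exact fun _ _ _ => trivial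
    | succ r ih =>
      intro u x hx
      obtain ⟨y, hxy, hyu⟩ := Set.exists_ne_of_one_lt_ncard (hdeg x hx) u
      exact ⟨y, hK hxy, hyu, ih x y ⟨x, hxy.symm⟩⟩
  exact Finset.mem_coe.2 (mem_descendSet.2 (hdescends R v v ⟨w, hadj⟩))

lemma card_component_le_of_notMem_descendSet (hdeg : ∀ v, H.degree v ≤ d)
    (hv : v ∉ descendSet H R) : (component H v).card ≤ (d + 1) ^ R := by
  have hsub : component H v ⊆ nbhd H {v} R := by
    intro w hw
    obtain ⟨q, hq⟩ := (mem_component.1 hw).exists_isPath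
    refine mem_nbhd.2 ⟨v, Finset.mem_singleton_self v, q, le_of_not_ge fun hR => hv ?_⟩
    have hnodup := hq.support_nodup
    rw [← Walk.cons_tail_support, List.nodup_cons] at hnodup
    exact mem_descendSet.2 (.of_isPath q hq hnodup.1 hR)
  calc (component H v).card ≤ (nbhd H {v} R).card := Finset.card_le_card hsub
    _ ≤ (d + 1) ^ R := by simpa using card_nbhd_le hdeg {v} R

lemma lt_card_component_of_mem_descendSet (hg : 2 * R < G.girth) (hH : H ≤ G)
    (hv : v ∈ descendSet H R) : R < (component H v).card := by
  obtain ⟨x, hx, hdist⟩ :=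
    (mem_descendSet.1 hv).exists_dist hg hH atLevel_root (Nat.zero_add R).le
  obtain ⟨q, hq⟩ := hx.exists_isPath
  have hsupport : q.support.toFinset ⊆ component H v := fun w hw =>
    mem_component.2 ⟨q.takeUntil w (List.mem_toFinset.1 hw)⟩
  calc R ≤ q.length := by simpa [hdist] using dist_le (q.mapLe hH)
    _ < q.support.toFinset.card := by
        rw [List.toFinset_card_of_nodup hq.support_nodup, Walk.length_support]
        exact Nat.lt_succ_self _
    _ ≤ (component H v).card := Finset.card_le_card hsupport

lemma Influences.mem_nbhd (h : Influences G e r u v) : v ∈ nbhd G e.toFinset r := by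
  induction r generalizing u v with
  | zero => exact h.elim
  | succ r ih =>
    obtain ⟨w, hvw, -, rfl | hw⟩ := h
    · exact subset_nbhd _ _ _ (Sym2.mem_toFinset.2 (Sym2.mem_mk_left v w))
    · exact mem_nbhd_succ_of_adj (ih hw) hvw.symm

lemma abs_card_descendSet_insert_sub_le (hdeg : ∀ v, G.degree v ≤ d) (R : ℕ)
    (he : e ∈ edgeFinset' G) (hs : s ⊆ edgeFinset' G) :
    |((descendSet (edgeGraph (insert e s)) R).card : ℝ) - (descendSet (edgeGraph s) R).card|
      ≤ 2 * (d + 1) ^ R := by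
  have hmono : descendSet (edgeGraph s) R ⊆ descendSet (edgeGraph (insert e s)) R :=
    descendSet_mono (fromEdgeSet_mono (Finset.coe_subset.2 (Finset.subset_insert e s))) R
  have hnear : descendSet (edgeGraph (insert e s)) R \ descendSet (edgeGraph s) R
      ⊆ nbhd G e.toFinset R := by
    intro v hv
    rw [Finset.mem_sdiff, mem_descendSet, mem_descendSet] at hv
    refine Influences.mem_nbhd (u := v) (by_contra fun hinf => hv.2 ?_)
    exact (ignores_descends he hinf s hs).mp hv.1
  have hends : e.toFinset.card ≤ 2 := by
    rw [Sym2.card_toFinset]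
    split_ifs <;> omega
  rw [← Finset.cast_card_sdiff hmono, Nat.abs_cast]
  exact_mod_cast calc _ ≤ (nbhd G e.toFinset R).card := Finset.card_le_card hnear
    _ ≤ e.toFinset.card * (d + 1) ^ R := card_nbhd_le hdeg _ R
    _ ≤ 2 * (d + 1) ^ R := Nat.mul_le_mul_right _ hends

lemma card_edgeFinset'_le (hdeg : ∀ v, G.degree v ≤ d) :
    (edgeFinset' G).card ≤ d * Fintype.card U := by
  have hedges : edgeFinset' G = G.edgeFinset := by
    ext e
    rw [mem_edgeFinset', mem_edgeFinset]
  have hsum : ∑ v, G.degree v ≤ Fintype.card U * d := by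
    simpa using Finset.sum_le_card_nsmul Finset.univ (G.degree ·) d fun v _ => hdeg v
  rw [G.sum_degrees_eq_twice_card_edges, ← hedges, mul_comm (Fintype.card U)] at hsum
  omega

lemma bernoulliExp_card_descendSet (hg : 2 * (r + 1) < G.girth) (hreg : ∀ v, G.degree v = d)
    (p : ℝ) : bernoulliExp p (edgeFinset' G) (fun s => (descendSet (edgeGraph s) (r + 1)).card)
      = rootProb d p r * Fintype.card U := by
  calc _ = bernoulliExp p (edgeFinset' G) (fun s =>
        ∑ v : U, if Descends (edgeGraph s) (r + 1) v v then (1 : ℝ) else 0) := by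
        simp only [descendSet, Finset.natCast_card_filter]
    _ = ∑ _v : U, rootProb d p r := by
        rw [bernoulliExp_sum]
        exact Finset.sum_congr rfl fun v _ => bernoulliProb_descends_root hg hreg p v
    _ = rootProb d p r * Fintype.card U := by
        rw [Finset.sum_const, Finset.card_univ, nsmul_eq_mul, mul_comm]

lemma exists_card_descendSet_deviation_le (d r : ℕ) {τ : ℝ} (hτ : 0 < τ) :
    ∃ γ > 0, ∀ {U : Type} [Fintype U] {G : SimpleGraph U} {p : ℝ},
      2 * (r + 1) < G.girth → (∀ v, G.degree v = d) → p ∈ Set.Icc 0 1 →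
      bernoulliProb p (edgeFinset' G) (fun s => (rootProb d p r + τ) * Fintype.card U
          ≤ (descendSet (edgeGraph s) (r + 1)).card) ≤ Real.exp (-γ * Fintype.card U) ∧
      bernoulliProb p (edgeFinset' G) (fun s => ((descendSet (edgeGraph s) (r + 1)).card : ℝ)
          ≤ (rootProb d p r - τ) * Fintype.card U) ≤ Real.exp (-γ * Fintype.card U) := by
  obtain ⟨γ, hγ, hdev⟩ := exists_bernoulliProb_deviation_le
    (C := 2 * ((d : ℝ) + 1) ^ (r + 1)) (K := d) (by positivity) (by positivity) hτ
  refine ⟨γ, hγ, fun {U} _ {G p} hg hreg hp => ?_⟩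
  have hdeg : ∀ v, G.degree v ≤ d := fun v => (hreg v).le
  have hE : ((edgeFinset' G).card : ℝ) ≤ d * Fintype.card U := by
    exact_mod_cast card_edgeFinset'_le hdeg
  have hn : (0 : ℝ) ≤ Fintype.card U := Nat.cast_nonneg _
  have hmean := bernoulliExp_card_descendSet hg hreg p
  set f : Finset (Sym2 U) → ℝ := fun s => (descendSet (edgeGraph s) (r + 1)).card
  have hlip : ∀ e ∈ edgeFinset' G, ∀ s ⊆ edgeFinset' G,
      |f (insert e s) - f s| ≤ 2 * ((d : ℝ) + 1) ^ (r + 1) := fun e he s hs =>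
    abs_card_descendSet_insert_sub_le hdeg (r + 1) he hs
  constructor
  · refine (bernoulliProb_mono hp fun s _ hs => ?_).trans (hdev hp hn hE hlip)
    rwa [hmean, ← add_mul]
  · refine (bernoulliProb_mono hp fun s _ hs => ?_).trans
      (hdev (f := fun s => -1 * f s) hp hn hE ?_)
    · rw [bernoulliExp_const_mul, hmean]
      linarith
    · intro e he s hs
      rw [← mul_sub, abs_mul, abs_neg, abs_one, one_mul]
      exact hlip e he s hs

end NonbacktrackingSet

section Connects

open SimpleGraph

variable {W : Type*} {G K K' : SimpleGraph W} {A B : Finset W}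

/-- Some vertex of `A` and some vertex of `B` lie in the same connected component of `K`. -/
def Connects (K : SimpleGraph W) (A B : Finset W) : Prop := ∃ x ∈ A, ∃ y ∈ B, K.Reachable x y

lemma Connects.mono (hK : K ≤ K') (h : Connects K A B) : Connects K' A B :=
  let ⟨x, hx, y, hy, hxy⟩ := h
  ⟨x, hx, y, hy, hxy.mono hK⟩

lemma connects_edgeGraph_edges {x y : W} (q : G.Walk x y) (hx : x ∈ A) (hy : y ∈ B) :
    Connects (edgeGraph q.edges.toFinset) A B := by
  refine ⟨x, hx, y, hy, ⟨q.transfer _ fun e he => ?_⟩⟩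
  rw [edgeSet_fromEdgeSet, List.coe_toFinset]
  exact ⟨he, G.not_isDiag_of_mem_edgeSet (q.edges_subset_edgeSet he)⟩

end Connects

section Sprinkling

open SimpleGraph

variable {U : Type} [Fintype U] {G : SimpleGraph U} {A B S : Finset U}
  {D : Finset (Sym2 U)} {b η δ : ℝ} {d k L : ℕ}

lemma cutCard_compl (G : SimpleGraph U) (S : Finset U) : cutCard G Sᶜ = cutCard G S := by
  unfold cutCard
  congr 1
  ext e
  simp only [Finset.mem_filter, Finset.mem_compl, and_congr_right_iff]
  refine fun _ => ⟨?_, ?_⟩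
  · rintro ⟨x, hx, y, hy, rfl⟩
    exact ⟨y, not_not.1 hy, x, hx, Sym2.eq_swap⟩
  · rintro ⟨x, hx, y, hy, rfl⟩
    exact ⟨y, hy, x, not_not.2 hx, Sym2.eq_swap⟩

lemma IsExpander.mul_le_cutCard (hG : IsExpander G b d) (hb : 0 ≤ b) {a : ℝ} (hS : a ≤ S.card)
    (hSc : a ≤ Sᶜ.card) : b * a ≤ cutCard G S := by
  rcases le_total (S.card : ℝ) (Fintype.card U / 2) with h | h
  · exact (mul_le_mul_of_nonneg_left hS hb).trans (hG.2 S h)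
  · have hcard : (S.card : ℝ) + Sᶜ.card = Fintype.card U := by
      exact_mod_cast Finset.card_add_card_compl S
    rw [← cutCard_compl]
    exact (mul_le_mul_of_nonneg_left hSc hb).trans (hG.2 Sᶜ (by linarith))

lemma ncard_neighborSet_eq_degree (G : SimpleGraph U) (v : U) :
    (G.neighborSet v).ncard = G.degree v := Set.ncard_eq_toFinset_card' _

lemma IsExpander.degree_le (hG : IsExpander G b d) (v : U) : G.degree v ≤ d :=
  (ncard_neighborSet_eq_degree G v).symm.trans_le (hG.1 v)

lemma IsRegularExpander.degree_eq (hG : IsRegularExpander G b d) (v : U) : G.degree v = d :=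
  (ncard_neighborSet_eq_degree G v).symm.trans (hG.2 v)

lemma cutCard_le_of_adj (hdeg : ∀ v, G.degree v ≤ d)
    (h : ∀ x ∈ S, ∀ y ∉ S, G.Adj x y → s(x, y) ∈ D ∨ y ∈ B) :
    cutCard G S ≤ D.card + B.card * d := by
  have hsub : (edgeFinset' G).filter (fun e => ∃ x ∈ S, ∃ y, y ∉ S ∧ e = s(x, y))
      ⊆ D ∪ B.biUnion fun y => G.incidenceFinset y := by
    intro e he
    obtain ⟨heG, x, hx, y, hy, rfl⟩ := Finset.mem_filter.1 he
    have hxy := mem_edgeFinset'.1 heG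
    refine Finset.mem_union.2 ((h x hx y hy hxy).imp_right fun hyB => Finset.mem_biUnion.2 ?_)
    exact ⟨y, hyB, (G.mem_incidenceFinset y _).2 ⟨hxy, Sym2.mem_mk_right x y⟩⟩
  refine (Finset.card_le_card hsub).trans <| (Finset.card_union_le _ _).trans <|
    Nat.add_le_add_left (Finset.card_biUnion_le_card_mul _ _ _ fun y _ => ?_) _
  exact (G.card_incidenceFinset_eq_degree y).trans_le (hdeg y)

lemma IsExpander.nbhd_deleteEdges_growth (hG : IsExpander G b d) (hb : 0 ≤ b) {a : ℝ}
    (hA : a ≤ A.card) (hk : a ≤ (nbhd (G.deleteEdges D) A k)ᶜ.card) :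
    b * a + d * (nbhd (G.deleteEdges D) A k).card
      ≤ D.card + d * (nbhd (G.deleteEdges D) A (k + 1)).card := by
  set N := nbhd (G.deleteEdges D) A
  have hN : N k ⊆ N (k + 1) := nbhd_subset_nbhd_succ _ _ _
  have hlower : b * a ≤ cutCard G (N k) :=
    hG.mul_le_cutCard hb (hA.trans (Nat.cast_le.2 (Finset.card_le_card (subset_nbhd _ _ _)))) hk
  have hupper : cutCard G (N k) ≤ D.card + (N (k + 1) \ N k).card * d := by
    refine cutCard_le_of_adj hG.degree_le fun x hx y hy hxy => or_iff_not_imp_left.2 fun hD => ?_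
    exact Finset.mem_sdiff.2
      ⟨mem_nbhd_succ_of_adj hx (deleteEdges_adj.2 ⟨hxy, hD⟩), hy⟩
  have hupper' : (cutCard G (N k) : ℝ) ≤ D.card + ((N (k + 1)).card - (N k).card) * d := by
    rw [← Finset.cast_card_sdiff hN]
    exact_mod_cast hupper
  linarith

lemma IsExpander.exists_short_walk [Nonempty U] (hG : IsExpander G b d) (hb : 0 ≤ b)
    (hL : 2 * d < L * (b * η)) (hA : η * Fintype.card U ≤ A.card)
    (hB : η * Fintype.card U ≤ B.card) (hD : (D.card : ℝ) ≤ b * η / 2 * Fintype.card U) :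
    ∃ x ∈ A, ∃ y ∈ B, ∃ q : (G.deleteEdges D).Walk x y, q.length ≤ L := by
  by_contra! hfar
  set n : ℝ := (Fintype.card U : ℝ)
  have hn : 0 < n := Nat.cast_pos.2 Fintype.card_pos
  set N := nbhd (G.deleteEdges D) A
  have hcompl : ∀ k ≤ L, η * n ≤ (N k)ᶜ.card := fun k hk => hB.trans <|
    Nat.cast_le.2 <| Finset.card_le_card fun y hy => Finset.mem_compl.2 fun hyN =>
      let ⟨x, hx, q, hq⟩ := mem_nbhd.1 hyN
      (hfar x hx y hy q).not_ge (hq.trans hk)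
  have hgrowth : ∀ k ≤ L, k * (b * η / 2 * n) ≤ d * (N k).card := by
    intro k hk
    induction k with
    | zero => rw [Nat.cast_zero, zero_mul]; positivity
    | succ k ih =>
      have hstep := hG.nbhd_deleteEdges_growth hb hA (hcompl k (by omega))
      have := ih (by omega)
      push_cast
      linarith
  have hle : (d : ℝ) * (N L).card ≤ d * n :=
    mul_le_mul_of_nonneg_left (Nat.cast_le.2 (Finset.card_le_univ _)) d.cast_nonneg
  linarith [hgrowth L le_rfl, mul_lt_mul_of_pos_right hL hn]

lemma IsExpander.exists_short_connection [Nonempty U] (hG : IsExpander G b d) (hb : 0 ≤ b)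
    (hL : 2 * d < L * (b * η)) (hA : η * Fintype.card U ≤ A.card)
    (hB : η * Fintype.card U ≤ B.card) (hD : (D.card : ℝ) ≤ b * η / 2 * Fintype.card U) :
    ∃ T, (T ⊆ edgeFinset' G ∧ T.card ≤ L ∧ Connects (edgeGraph T) A B) ∧ Disjoint T D := by
  obtain ⟨x, hx, y, hy, q, hq⟩ := hG.exists_short_walk hb hL hA hB hD
  have hedges : ∀ e ∈ q.edges.toFinset, e ∈ G.edgeSet ∧ e ∉ D := fun e he => by
    simpa [edgeSet_deleteEdges] using q.edges_subset_edgeSet (List.mem_toFinset.1 he)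
  refine ⟨q.edges.toFinset, ⟨fun e he => mem_edgeFinset'.2 (hedges e he).1, ?_,
    connects_edgeGraph_edges q hx hy⟩, Finset.disjoint_left.2 fun e he => (hedges e he).2⟩
  exact (List.toFinset_card_le _).trans (q.length_edges.trans_le hq)

lemma exists_pairwiseDisjoint_of_forall_exists_disjoint {α : Type*}
    {P : Finset α → Prop} {y : ℝ} (hP : ∀ T, P T → T.card ≤ L)
    (h : ∀ D : Finset α, (D.card : ℝ) ≤ y → ∃ T, P T ∧ Disjoint T D) {m : ℕ}
    (hm : (m * L : ℝ) ≤ y) :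
    ∃ T : ℕ → Finset α, (∀ i ∈ Finset.range m, P (T i)) ∧
      (Finset.range m : Set ℕ).PairwiseDisjoint T := by
  induction m with
  | zero => exact ⟨fun _ => ∅, by simp, by simp⟩
  | succ m ih =>
    have hm' : (m * L : ℝ) ≤ y := hm.trans' (by gcongr; exact Nat.le_succ m)
    obtain ⟨T, hT, hdisj⟩ := ih hm'
    have hused : ((Finset.range m).biUnion T).card ≤ m * L := by
      simpa using Finset.card_biUnion_le_card_mul _ T L fun i hi => hP _ (hT i hi)
    obtain ⟨T', hT', hdisj'⟩ := h ((Finset.range m).biUnion T) (hm'.trans' (mod_cast hused))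
    have hnew : ∀ i < m, Disjoint T' (T i) := fun i hi =>
      hdisj'.mono_right (Finset.subset_biUnion_of_mem T (Finset.mem_range.2 hi))
    have hupdate : ∀ i < m, Function.update T m T' i = T i := fun i hi =>
      Function.update_of_ne hi.ne T' T
    refine ⟨Function.update T m T', fun i hi => ?_, ?_⟩
    · rcases (Finset.mem_range_succ_iff.1 hi).lt_or_eq with hi | rfl
      · exact (hupdate i hi).symm ▸ hT i (Finset.mem_range.2 hi)
      · rwa [Function.update_self]
    · rw [Finset.range_add_one, Finset.coe_insert,
        Set.pairwiseDisjoint_insert_of_notMem (by simp)]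
      refine ⟨fun i hi j hj hij => ?_, fun i hi => ?_⟩ <;>
        rw [Finset.mem_coe, Finset.mem_range] at hi
      · rw [Finset.mem_coe, Finset.mem_range] at hj
        rw [Function.onFun, hupdate i hi, hupdate j hj]
        exact hdisj (by simpa using hi) (by simpa using hj) hij
      · rw [Function.update_self, hupdate i hi]
        exact hnew i hi

lemma IsExpander.bernoulliProb_not_connects_le [Nonempty U] (hG : IsExpander G b d) (hb : 0 ≤ b)
    (hη : 0 ≤ η) (hδ : δ ∈ Set.Icc 0 1) (hL₀ : 0 < L) (hL : 2 * d < L * (b * η))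
    (hA : η * Fintype.card U ≤ A.card) (hB : η * Fintype.card U ≤ B.card) :
    bernoulliProb δ (edgeFinset' G) (fun t => ¬ Connects (edgeGraph t) A B)
      ≤ Real.exp (1 - δ ^ L * (b * η / (2 * L)) * Fintype.card U) := by
  have : (0 : ℝ) < L := Nat.cast_pos.2 hL₀
  have hδ₀ : 0 ≤ δ ^ L := pow_nonneg hδ.1 L
  have hδ₁ : δ ^ L ≤ 1 := pow_le_one₀ hδ.1 hδ.2
  set y := b * η / (2 * L) * Fintype.card U with hy
  have hy₀ : 0 ≤ y := by positivity
  have hyL : ⌊y⌋₊ * L ≤ b * η / 2 * Fintype.card U := by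
    calc ⌊y⌋₊ * L ≤ y * L := by gcongr; exact Nat.floor_le hy₀
      _ = b * η / 2 * Fintype.card U := by rw [hy]; field_simp
  obtain ⟨T, hT, hdisj⟩ := exists_pairwiseDisjoint_of_forall_exists_disjoint
    (fun T hT => hT.2.1) (fun D => hG.exists_short_connection hb hL hA hB (D := D)) hyL
  calc bernoulliProb δ (edgeFinset' G) (fun t => ¬ Connects (edgeGraph t) A B)
      ≤ bernoulliProb δ (edgeFinset' G) (fun t => ∀ i ∈ Finset.range ⌊y⌋₊, ¬ T i ⊆ t) :=
        bernoulliProb_mono hδ fun t _ ht i hi hsub => ht <|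
          (hT i hi).2.2.mono (fromEdgeSet_mono (Finset.coe_subset.2 hsub))
    _ ≤ (1 - δ ^ L) ^ (Finset.range ⌊y⌋₊).card :=
        bernoulliProb_forall_not_subset_le hδ (fun i hi => ⟨(hT i hi).1, (hT i hi).2.1⟩) hdisj
    _ ≤ Real.exp (-δ ^ L) ^ ⌊y⌋₊ := by
        rw [Finset.card_range]
        gcongr
        exact Real.one_sub_le_exp_neg _
    _ = Real.exp (-(δ ^ L * ⌊y⌋₊)) := by rw [← Real.exp_nat_mul]; ring_nf
    _ ≤ Real.exp (1 - δ ^ L * (b * η / (2 * L)) * Fintype.card U) := by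
        rw [Real.exp_le_exp, mul_assoc, ← hy]
        nlinarith [Nat.lt_floor_add_one y]

lemma exists_bernoulliProb_not_connects_le (d : ℕ) (hb : 0 < b) (hη : 0 < η)
    (hδ : δ ∈ Set.Ioc 0 1) :
    ∃ κ > 0, ∀ {U : Type} [Fintype U] [Nonempty U] {G : SimpleGraph U} {A B : Finset U},
      IsExpander G b d → η * Fintype.card U ≤ A.card → η * Fintype.card U ≤ B.card →
      bernoulliProb δ (edgeFinset' G) (fun t => ¬ Connects (edgeGraph t) A B)
        ≤ Real.exp (1 - κ * Fintype.card U) := by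
  obtain ⟨L, hL⟩ := exists_nat_gt (2 * d / (b * η))
  have hL₀ : (0 : ℝ) < L := hL.trans_le' (by positivity)
  have := hδ.1
  refine ⟨δ ^ L * (b * η / (2 * L)), by positivity, fun {U} _ _ {G A B} hG hA hB => ?_⟩
  exact hG.bernoulliProb_not_connects_le hb.le hη.le ⟨hδ.1.le, hδ.2⟩ (Nat.cast_pos.1 hL₀)
    ((div_lt_iff₀ (by positivity)).1 hL) hA hB

end Sprinkling

lemma card_inter_add_card_le {α : Type*} {s t : Finset α} (h : s ⊆ t) (u : Finset α) :
    (t ∩ u).card + s.card ≤ (s ∩ u).card + t.card := by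
  have hcover : t ∩ u ⊆ s ∩ u ∪ t \ s := by grind
  have := (Finset.card_le_card hcover).trans (Finset.card_union_le _ _)
  have := Finset.card_sdiff_add_card_eq_card h
  omega

section Splitting

open Filter SimpleGraph

variable {U : Type} [Fintype U] {G H J K : SimpleGraph U} {W X Y : Finset U} {R d : ℕ}
  {a b η δ M : ℝ} {v : U}

/-- The vertex sets of the connected components of `H` with at least `R` vertices. -/
def largeComps (H : SimpleGraph U) (R : ℕ) : Finset (Finset U) :=
  (Finset.univ.filter fun v => R ≤ (component H v).card).image (component H)

lemma mem_largeComps : X ∈ largeComps H R ↔ ∃ v, R ≤ (component H v).card ∧ component H v = X := by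
  simp only [largeComps, Finset.mem_image, Finset.mem_filter_univ]

lemma pairwiseDisjoint_largeComps (H : SimpleGraph U) (R : ℕ) :
    (largeComps H R : Set (Finset U)).PairwiseDisjoint id := by
  intro X hX Y hY hne
  obtain ⟨v, -, rfl⟩ := mem_largeComps.1 hX
  obtain ⟨w, -, rfl⟩ := mem_largeComps.1 hY
  exact Finset.disjoint_left.2 fun x hv hw =>
    hne ((component_eq_of_mem hv).symm.trans (component_eq_of_mem hw))

lemma card_largeComps_mul_le (H : SimpleGraph U) (R : ℕ) :
    (largeComps H R).card * R ≤ Fintype.card U := by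
  calc (largeComps H R).card * R ≤ ∑ X ∈ largeComps H R, X.card :=
        Finset.card_nsmul_le_sum _ _ _ fun X hX => by
          obtain ⟨v, hv, rfl⟩ := mem_largeComps.1 hX
          exact hv
    _ = ((largeComps H R).biUnion id).card :=
        (Finset.card_biUnion (pairwiseDisjoint_largeComps H R)).symm
    _ ≤ Fintype.card U := Finset.card_le_univ _

/-- `X` is a union of connected components of `H`. -/
def IsClosedUnder (H : SimpleGraph U) (X : Finset U) : Prop := ∀ x ∈ X, component H x ⊆ X

lemma isClosedUnder_component (H : SimpleGraph U) (v : U) : IsClosedUnder H (component H v) :=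
  fun _ hx => (component_eq_of_mem hx).le

lemma IsClosedUnder.anti (hH : H ≤ J) (hX : IsClosedUnder J X) : IsClosedUnder H X := fun x hx =>
  (component_mono hH x).trans (hX x hx)

lemma IsClosedUnder.sdiff (hX : IsClosedUnder H X) (hY : IsClosedUnder H Y) :
    IsClosedUnder H (X \ Y) := by
  intro x hx y hy
  rw [Finset.mem_sdiff] at hx ⊢
  refine ⟨hX x hx.1 hy, fun hyY => hx.2 (hY y hyY ?_)⟩
  rw [component_eq_of_mem hy]
  exact self_mem_component H x

/-- `𝒮` and the remaining large components of `H` each cover at least `a` vertices, and `K` does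
not connect the two parts. -/
def SplitsAt (R : ℕ) (a : ℝ) (H K : SimpleGraph U) (𝒮 : Finset (Finset U)) : Prop :=
  a ≤ (𝒮.biUnion id).card ∧ a ≤ ((largeComps H R \ 𝒮).biUnion id).card ∧
    ¬ Connects K (𝒮.biUnion id) ((largeComps H R \ 𝒮).biUnion id)

lemma exists_splitsAt_of_isClosedUnder (hW : ∀ v ∈ W, R ≤ (component H v).card)
    (hH : IsClosedUnder H X) (hK : IsClosedUnder K X) (hin : a ≤ (W ∩ X).card)
    (hout : a ≤ (W \ X).card) : ∃ 𝒮 ∈ (largeComps H R).powerset, SplitsAt R a H K 𝒮 := by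
  set 𝒮 := (largeComps H R).filter (· ⊆ X)
  have hlarge : ∀ v ∈ W, component H v ∈ largeComps H R := fun v hv =>
    mem_largeComps.2 ⟨v, hW v hv, rfl⟩
  have hsub : 𝒮.biUnion id ⊆ X :=
    Finset.biUnion_subset.2 fun Y hY => (Finset.mem_filter.1 hY).2
  have hdisj : ∀ y ∈ (largeComps H R \ 𝒮).biUnion id, y ∉ X := by
    intro y hy hyX
    obtain ⟨Y, hY, hyY⟩ := Finset.mem_biUnion.1 hy
    obtain ⟨hYlarge, hY𝒮⟩ := Finset.mem_sdiff.1 hY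
    obtain ⟨v, -, rfl⟩ := mem_largeComps.1 hYlarge
    exact hY𝒮 (Finset.mem_filter.2 ⟨hYlarge, (component_eq_of_mem hyY).symm.trans_le (hH y hyX)⟩)
  refine ⟨𝒮, Finset.mem_powerset.2 (Finset.filter_subset _ _),
    hin.trans (Nat.cast_le.2 (Finset.card_le_card fun v hv => ?_)),
    hout.trans (Nat.cast_le.2 (Finset.card_le_card fun v hv => ?_)), ?_⟩
  · obtain ⟨hvW, hvX⟩ := Finset.mem_inter.1 hv
    exact Finset.mem_biUnion.2
      ⟨component H v, Finset.mem_filter.2 ⟨hlarge v hvW, hH v hvX⟩, self_mem_component H v⟩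
  · obtain ⟨hvW, hvX⟩ := Finset.mem_sdiff.1 hv
    exact Finset.mem_biUnion.2 ⟨component H v, Finset.mem_sdiff.2 ⟨hlarge v hvW, fun h =>
      hvX ((Finset.mem_filter.1 h).2 (self_mem_component H v))⟩, self_mem_component H v⟩
  · rintro ⟨x, hx, y, hy, hxy⟩
    exact hdisj y hy (hK x (hsub hx) (mem_component.2 hxy))

lemma exists_isClosedUnder_card_inter (ha : 0 < a) (haW : a ≤ W.card)
    (hM : ∀ v, ((component H v).card : ℝ) ≤ M) :
    ∃ X, IsClosedUnder H X ∧ a ≤ (W ∩ X).card ∧ ((W ∩ X).card : ℝ) ≤ a + M := by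
  obtain ⟨X, hX, hmin⟩ := Finset.exists_min_image
    (Finset.univ.filter fun X : Finset U => IsClosedUnder H X ∧ a ≤ (W ∩ X).card) Finset.card
    ⟨Finset.univ, Finset.mem_filter_univ _ |>.2
      ⟨fun _ _ => Finset.subset_univ _, by rwa [Finset.inter_univ]⟩⟩
  simp only [Finset.mem_filter_univ] at hX hmin
  refine ⟨X, hX.1, hX.2, ?_⟩
  obtain ⟨x, hx⟩ : X.Nonempty := by
    rw [Finset.nonempty_iff_ne_empty]
    rintro rfl
    rw [Finset.inter_empty, Finset.card_empty, Nat.cast_zero] at hX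
    exact hX.2.not_gt ha
  have hlt : ((W ∩ (X \ component H x)).card : ℝ) < a := by
    by_contra! hge
    refine (hmin _ ⟨hX.1.sdiff (isClosedUnder_component H x), hge⟩).not_gt (Finset.card_lt_card ?_)
    exact ⟨Finset.sdiff_subset, fun h => (Finset.mem_sdiff.1 (h hx)).2 (self_mem_component H x)⟩
  have hcover : W ∩ X ⊆ W ∩ (X \ component H x) ∪ component H x := by
    rw [← Finset.inter_sdiff_assoc, Finset.sdiff_union_self_eq_union]
    exact Finset.subset_union_left
  have hcard : ((W ∩ X).card : ℝ) ≤ (W ∩ (X \ component H x)).card + (component H x).card := by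
    exact_mod_cast (Finset.card_le_card hcover).trans (Finset.card_union_le _ _)
  linarith [hM x]

lemma card_component_le_of_card_inter_lt (hdeg : ∀ v, J.degree v ≤ d)
    (ha : ((d + 1) ^ R : ℝ) ≤ a) (hW : W ⊆ descendSet J R)
    (hclose : ((descendSet J R).card : ℝ) < W.card + a)
    (hinter : ((W ∩ component J v).card : ℝ) < a) : ((component J v).card : ℝ) ≤ 2 * a := by
  by_cases hsub : component J v ⊆ descendSet J R
  · have hloss : ((component J v).card : ℝ) + W.card
        ≤ (W ∩ component J v).card + (descendSet J R).card := by
      exact_mod_cast Finset.inter_eq_right.2 hsub ▸ card_inter_add_card_le hW (component J v)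
    linarith
  · obtain ⟨y, hyC, hyW⟩ := Finset.not_subset.1 hsub
    have hsmall : ((component J y).card : ℝ) ≤ (d + 1) ^ R :=
      mod_cast card_component_le_of_notMem_descendSet hdeg hyW
    rw [component_eq_of_mem hyC] at hsmall
    have : (0 : ℝ) ≤ (d + 1) ^ R := by positivity
    linarith

lemma exists_splitsAt (hg : 2 * R < G.girth) (hdeg : ∀ v, G.degree v ≤ d) (hH : H ≤ J)
    (hK : K ≤ J) (hJ : J ≤ G) (ha : ((d + 1) ^ R : ℝ) ≤ a)
    (hmax : ∀ w, (component J w).card ≤ (component J v).card)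
    (hbad : 8 * a ≤ (descendSet J R \ component J v).card)
    (hclose : ((descendSet J R).card : ℝ) < (descendSet H R).card + a) :
    ∃ 𝒮 ∈ (largeComps H R).powerset, SplitsAt R a H K 𝒮 := by
  set W := descendSet J R
  set W' := descendSet H R
  set C := component J v
  have hsplit : ∀ X, IsClosedUnder J X → a ≤ (W' ∩ X).card → a ≤ (W' \ X).card →
      ∃ 𝒮 ∈ (largeComps H R).powerset, SplitsAt R a H K 𝒮 := fun X hX =>
    exists_splitsAt_of_isClosedUnder
      (fun w hw => (lt_card_component_of_mem_descendSet hg (hH.trans hJ) hw).le)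
      (hX.anti hH) (hX.anti hK)
  have hpart : ∀ X, ((W' ∩ X).card : ℝ) + (W' \ X).card = W'.card := fun X =>
    mod_cast Finset.card_inter_add_card_sdiff W' X
  have hW'C : 7 * a ≤ (W' \ C).card := by
    have hloss : ((W \ C).card : ℝ) + W'.card ≤ (W' \ C).card + W.card := by
      rw [Finset.sdiff_eq_inter_compl, Finset.sdiff_eq_inter_compl]
      exact_mod_cast card_inter_add_card_le (descendSet_mono hH R) Cᶜ
    linarith
  have ha₀ : 0 < a := ha.trans_lt' (by positivity)
  by_cases hCa : a ≤ (W' ∩ C).card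
  · exact hsplit C (isClosedUnder_component J v) hCa (by linarith)
  have hC : (C.card : ℝ) ≤ 2 * a := card_component_le_of_card_inter_lt
    (fun w => (degree_le_of_le hJ).trans (hdeg w)) ha (descendSet_mono hH R) hclose (not_le.1 hCa)
  have hW' := hpart C
  obtain ⟨X, hX, hXlower, hXupper⟩ := exists_isClosedUnder_card_inter (W := W') ha₀
    (by linarith [(W' ∩ C).card.cast_nonneg (α := ℝ)])
    fun w => (Nat.cast_le.2 (hmax w)).trans hC
  refine hsplit X hX hXlower ?_
  linarith [hpart X, (W' ∩ C).card.cast_nonneg (α := ℝ)]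

lemma two_pow_card_largeComps_le (H : SimpleGraph U) {κ : ℝ} (hκ : 0 ≤ κ) (hR : 1 ≤ κ * R) :
    (2 : ℝ) ^ (largeComps H R).card ≤ Real.exp (κ * Fintype.card U) := by
  have hcard : ((largeComps H R).card : ℝ) * R ≤ Fintype.card U :=
    mod_cast card_largeComps_mul_le H R
  have htwo : (2 : ℝ) ≤ Real.exp 1 := by linarith [Real.add_one_le_exp (1 : ℝ)]
  calc (2 : ℝ) ^ (largeComps H R).card ≤ Real.exp 1 ^ (largeComps H R).card := by gcongr
    _ = Real.exp (largeComps H R).card := by rw [← Real.exp_nat_mul, mul_one]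
    _ ≤ Real.exp (κ * ((largeComps H R).card * R)) := by
        rw [Real.exp_le_exp]
        nlinarith [(largeComps H R).card.cast_nonneg (α := ℝ)]
    _ ≤ Real.exp (κ * Fintype.card U) := by gcongr

lemma exists_bernoulliProb_exists_splitsAt_le (d : ℕ) (hb : 0 < b) (hη : 0 < η)
    (hδ : δ ∈ Set.Ioc 0 1) :
    ∃ κ > 0, ∀ᶠ R in atTop, ∀ {U : Type} [Fintype U] [Nonempty U] {G : SimpleGraph U}
      (H : SimpleGraph U), IsExpander G b d →
      bernoulliProb δ (edgeFinset' G) (fun t => ∃ 𝒮 ∈ (largeComps H R).powerset,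
          SplitsAt R (η * Fintype.card U) H (edgeGraph t) 𝒮)
        ≤ 3 * Real.exp (-κ * Fintype.card U) := by
  obtain ⟨κ, hκ, hconnect⟩ := exists_bernoulliProb_not_connects_le d hb hη hδ
  have hκ₂ : 0 < κ / 2 := half_pos hκ
  refine ⟨κ / 2, hκ₂, ?_⟩
  filter_upwards [(tendsto_natCast_atTop_atTop.const_mul_atTop hκ₂).eventually_ge_atTop 1]
    with R hR U _ _ G H hG
  have hδ' : δ ∈ Set.Icc 0 1 := Set.Ioc_subset_Icc_self hδ
  have hterm : ∀ 𝒮, bernoulliProb δ (edgeFinset' G)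
      (fun t => SplitsAt R (η * Fintype.card U) H (edgeGraph t) 𝒮)
        ≤ Real.exp (1 - κ * Fintype.card U) := by
    intro 𝒮
    by_cases hsize : η * Fintype.card U ≤ (𝒮.biUnion id).card ∧
        η * Fintype.card U ≤ ((largeComps H R \ 𝒮).biUnion id).card
    · exact (bernoulliProb_mono hδ' fun t _ ht => ht.2.2).trans (hconnect hG hsize.1 hsize.2)
    · refine (bernoulliProb_mono hδ' (Q := fun _ => False) fun t _ ht =>
        hsize ⟨ht.1, ht.2.1⟩).trans ?_
      simp only [bernoulliProb, if_false, bernoulliExp_const]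
      positivity
  calc _ ≤ ∑ 𝒮 ∈ (largeComps H R).powerset, Real.exp (1 - κ * Fintype.card U) :=
        (bernoulliProb_exists_mem_le hδ' _ _ _).trans (Finset.sum_le_sum fun 𝒮 _ => hterm 𝒮)
    _ = 2 ^ (largeComps H R).card * Real.exp (1 - κ * Fintype.card U) := by
        rw [Finset.sum_const, Finset.card_powerset, nsmul_eq_mul, Nat.cast_pow, Nat.cast_ofNat]
    _ ≤ Real.exp (κ / 2 * Fintype.card U) * Real.exp (1 - κ * Fintype.card U) := by
        gcongr
        exact two_pow_card_largeComps_le H hκ₂.le hR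
    _ = Real.exp 1 * Real.exp (-(κ / 2) * Fintype.card U) := by
        rw [← Real.exp_add, ← Real.exp_add]
        ring_nf
    _ ≤ 3 * Real.exp (-(κ / 2) * Fintype.card U) := by
        gcongr
        linarith [Real.exp_one_lt_d9]

end Splitting

lemma nonempty_of_girth_pos {W : Type*} {G : SimpleGraph W} (hg : 0 < G.girth) : Nonempty W := by
  by_contra hW
  have := not_nonempty_iff.1 hW
  exact hg.ne' (SimpleGraph.girth_eq_zero.2 fun v => isEmptyElim v)

lemma exists_one_sub_eq_mul_one_sub {p p' : ℝ} (hp' : p' < p) (hp : p < 1) :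
    ∃ δ ∈ Set.Ioc (0 : ℝ) 1, 1 - p = (1 - p') * (1 - δ) := by
  have hpos : 0 < 1 - p' := by linarith
  refine ⟨(p - p') / (1 - p'), ⟨div_pos (sub_pos.2 hp') hpos, ?_⟩, by field_simp; ring⟩
  exact (div_le_one hpos).2 (by linarith)

open Filter in
lemma exists_le_exp_of_le_one_sub_pow {q γ : ℝ} (hq : q ∈ Set.Ioc 0 1) (hγ : 0 < γ) (C : ℝ)
    (N : ℕ) :
    ∃ c > 0, ∀ (n : ℕ) (x : ℝ), x ≤ 1 - q ^ n → (N ≤ n → x ≤ C * Real.exp (-γ * n)) →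
      x ≤ Real.exp (-c * n) := by
  have hC : ∀ᶠ n : ℕ in atTop, C ≤ Real.exp (γ / 2 * n) :=
    (Real.tendsto_exp_atTop.comp
      (tendsto_natCast_atTop_atTop.const_mul_atTop (half_pos hγ))).eventually_ge_atTop C
  obtain ⟨M, hM⟩ :=
    eventually_atTop.1 (hC.and ((eventually_ge_atTop N).and (eventually_gt_atTop 0)))
  have hM₀ : (0 : ℝ) < M := Nat.cast_pos.2 (hM M le_rfl).2.2
  have hqM : 0 < q ^ M := pow_pos hq.1 M
  refine ⟨min (γ / 2) (q ^ M / M), lt_min (half_pos hγ) (div_pos hqM hM₀), ?_⟩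
  intro n x hsmall hlarge
  rcases le_total M n with hMn | hnM
  · obtain ⟨hC, hN, -⟩ := hM n hMn
    calc x ≤ C * Real.exp (-γ * n) := hlarge hN
      _ ≤ Real.exp (γ / 2 * n) * Real.exp (-γ * n) := by gcongr
      _ = Real.exp (-(γ / 2) * n) := by rw [← Real.exp_add]; ring_nf
      _ ≤ Real.exp (-min (γ / 2) (q ^ M / M) * n) := by gcongr; exact min_le_left _ _
  · calc x ≤ 1 - q ^ n := hsmall
      _ ≤ 1 - q ^ M := sub_le_sub_left (pow_le_pow_of_le_one hq.1.le hq.2 hnM) 1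
      _ ≤ Real.exp (-q ^ M) := Real.one_sub_le_exp_neg _
      _ = Real.exp (-(q ^ M / M) * M) := by field_simp
      _ ≤ Real.exp (-(q ^ M / M) * n) := by
          rw [Real.exp_le_exp, neg_mul, neg_mul, neg_le_neg_iff]
          gcongr
      _ ≤ Real.exp (-min (γ / 2) (q ^ M / M) * n) := by gcongr; exact min_le_right _ _

section OuterCores

open Filter SimpleGraph

variable {U : Type} [Fintype U] {G H J K : SimpleGraph U} {b ε p : ℝ} {d R : ℕ}

/-- The bad event of the theorem: for some largest component of `H`, the 2-cores of the other
components contain more than an `ε` fraction of all vertices. -/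
def HasLargeOuterCores (ε : ℝ) (H : SimpleGraph U) : Prop :=
  ∃ c₁ : H.ConnectedComponent, IsLargestComp H c₁ ∧
    ε * Fintype.card U <
      ((Finset.univ.filter (fun v : U =>
          H.connectedComponentMk v ≠ c₁ ∧
          v ∈ (twoCoreComp H (H.connectedComponentMk v)).support)).card : ℝ)

lemma HasLargeOuterCores.exists_component (h : HasLargeOuterCores ε H) (R : ℕ) :
    ∃ v, (∀ w, (component H w).card ≤ (component H v).card) ∧
      ε * Fintype.card U < (descendSet H R \ component H v).card := by
  obtain ⟨c, hc, hlt⟩ := h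
  obtain ⟨v, rfl⟩ := c.exists_rep
  refine ⟨v, fun w => hc _, hlt.trans_le (Nat.cast_le.2 (Finset.card_le_card fun w hw => ?_))⟩
  obtain ⟨hne, hcore⟩ := (Finset.mem_filter_univ w).1 hw
  exact Finset.mem_sdiff.2 ⟨support_twoCoreComp_subset_descendSet H _ R hcore, fun hvw =>
    hne (ConnectedComponent.sound (mem_component.1 hvw).symm)⟩

lemma HasLargeOuterCores.exists_splitsAt (h : HasLargeOuterCores ε J) (hg : 2 * R < G.girth)
    (hdeg : ∀ v, G.degree v ≤ d) (hH : H ≤ J) (hK : K ≤ J) (hJ : J ≤ G)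
    (hbig : ((d + 1) ^ R : ℝ) ≤ ε / 8 * Fintype.card U)
    (hclose : ((descendSet J R).card : ℝ) < (descendSet H R).card + ε / 8 * Fintype.card U) :
    ∃ 𝒮 ∈ (largeComps H R).powerset, SplitsAt R (ε / 8 * Fintype.card U) H K 𝒮 := by
  obtain ⟨v, hmax, hlt⟩ := h.exists_component R
  exact Percolation.exists_splitsAt hg hdeg hH hK hJ hbig hmax (by linarith) hclose

lemma not_hasLargeOuterCores_bot (hε : 0 ≤ ε) :
    ¬ HasLargeOuterCores ε (⊥ : SimpleGraph U) := by
  intro h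
  obtain ⟨v, -, hlt⟩ := h.exists_component 1
  have hempty : descendSet (⊥ : SimpleGraph U) 1 = ∅ :=
    Finset.eq_empty_of_forall_notMem fun w hw =>
      let ⟨_, hadj, _⟩ := mem_descendSet.1 hw
      hadj
  rw [hempty, Finset.empty_sdiff, Finset.card_empty, Nat.cast_zero] at hlt
  exact hlt.not_ge (by positivity)

lemma exists_bernoulliProb_hasLargeOuterCores_le (d : ℕ) (hp : p ∈ Set.Ioo 0 1) (hε : 0 < ε)
    (hb : 0 < b) :
    ∃ R > 0, ∃ γ > 0, ∀ᶠ n in atTop, ∀ {U : Type} [Fintype U] {G : SimpleGraph U},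
      Fintype.card U = n → IsRegularExpander G b d → 2 * R < G.girth →
      bernoulliProb p (edgeFinset' G) (fun s => HasLargeOuterCores ε (edgeGraph s))
        ≤ 5 * Real.exp (-γ * n) := by
  have hη : 0 < ε / 8 := by positivity
  have hτ : 0 < ε / 24 := by positivity
  obtain ⟨p', hp', hroot⟩ := exists_rootProb_sub_le d hp hτ
  have hp'₁ : p' ∈ Set.Icc 0 1 := ⟨hp'.1.le, (hp'.2.trans hp.2).le⟩
  obtain ⟨δ, hδ, hsprinkle⟩ := exists_one_sub_eq_mul_one_sub hp'.2 hp.2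
  obtain ⟨κ, hκ, hsplit⟩ := exists_bernoulliProb_exists_splitsAt_le d hb hη hδ
  obtain ⟨r, hr, hsplit⟩ := (hroot.and ((tendsto_add_atTop_nat 1).eventually hsplit)).exists
  obtain ⟨γ, hγ, hdev⟩ := exists_card_descendSet_deviation_le d r hτ
  refine ⟨r + 1, r.succ_pos, min γ κ, lt_min hγ hκ, ?_⟩
  filter_upwards [(tendsto_natCast_atTop_atTop.const_mul_atTop hη).eventually_ge_atTop
    (((d : ℝ) + 1) ^ (r + 1))] with n hn U _ G hU hG hg
  subst hU
  have := nonempty_of_girth_pos (hg.trans_le' (Nat.zero_le _))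
  have hmain := bernoulliProb_le_of_union hp'₁ (Set.Ioc_subset_Icc_self hδ) hsprinkle
    (P := fun s => HasLargeOuterCores ε (edgeGraph s))
    (P' := fun s => (rootProb d p r + ε / 24) * Fintype.card U
      ≤ (descendSet (edgeGraph s) (r + 1)).card)
    (P₁ := fun s => ((descendSet (edgeGraph s) (r + 1)).card : ℝ)
      ≤ (rootProb d p' r - ε / 24) * Fintype.card U)
    (fun s hs t ht hlarge => ?_) fun s _ => hsplit (edgeGraph s) hG.1
  · have hupper := (hdev hg hG.degree_eq (Set.Ioo_subset_Icc_self hp)).1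
    have hlower := (hdev hg hG.degree_eq hp'₁).2
    have hexp : ∀ x, min γ κ ≤ x →
        Real.exp (-x * Fintype.card U) ≤ Real.exp (-min γ κ * Fintype.card U) := fun x hx => by
      gcongr
    linarith [hexp γ (min_le_left _ _), hexp κ (min_le_right _ _)]
  · rw [or_iff_not_imp_left, or_iff_not_imp_left]
    intro hupper hlower
    refine hlarge.exists_splitsAt hg hG.1.degree_le
      (fromEdgeSet_mono (Finset.coe_subset.2 Finset.subset_union_left))
      (fromEdgeSet_mono (Finset.coe_subset.2 Finset.subset_union_right))
      (edgeGraph_le (Finset.union_subset hs ht)) hn ?_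
    nlinarith [mul_le_mul_of_nonneg_right hr (Nat.cast_nonneg (α := ℝ) (Fintype.card U))]

lemma bernoulliProb_hasLargeOuterCores_le_one_sub_pow (hp : p ∈ Set.Icc 0 1) (hε : 0 ≤ ε)
    (hdeg : ∀ v, G.degree v ≤ d) :
    bernoulliProb p (edgeFinset' G) (fun s => HasLargeOuterCores ε (edgeGraph s))
      ≤ 1 - ((1 - p) ^ d) ^ Fintype.card U := by
  have hempty : ¬ HasLargeOuterCores ε (edgeGraph (∅ : Finset (Sym2 U))) := by
    rw [edgeGraph, Finset.coe_empty, fromEdgeSet_empty]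
    exact not_hasLargeOuterCores_bot hε
  refine (bernoulliProb_le_of_not_empty hp hempty).trans (sub_le_sub_left ?_ 1)
  rw [← pow_mul]
  exact pow_le_pow_of_le_one (sub_nonneg.2 hp.2) (sub_le_self 1 hp.1) (card_edgeFinset'_le hdeg)

end OuterCores

theorem two_cores_outside_giant_are_small_general (d : ℕ) {p ε b : ℝ} (hp : p ∈ Set.Ioo 0 1)
    (hε : 0 < ε) (hb : 0 < b) :
    ∃ R : ℕ, 0 < R ∧ ∃ c > (0:ℝ),
      ∀ (V : Type) [Fintype V] [DecidableEq V] (G : SimpleGraph V),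
        IsRegularExpander G b d → ((2 * R : ℕ) : ℕ∞) < G.girth →
        percProb G p (HasLargeOuterCores ε) ≤ Real.exp (-c * Fintype.card V) := by
  obtain ⟨R, hR, γ, hγ, hlarge⟩ := exists_bernoulliProb_hasLargeOuterCores_le d hp hε hb
  obtain ⟨N, hlarge⟩ := Filter.eventually_atTop.1 hlarge
  have hp₁ : 0 < 1 - p := sub_pos.2 hp.2
  obtain ⟨c, hc, hbound⟩ := exists_le_exp_of_le_one_sub_pow
    ⟨pow_pos hp₁ d, pow_le_one₀ hp₁.le (sub_le_self 1 hp.1.le)⟩ hγ 5 N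
  refine ⟨R, hR, c, hc, fun V _ inst G hG hg => ?_⟩
  obtain rfl : inst = fun v w => Classical.propDecidable (v = w) := Subsingleton.elim _ _
  rw [percProb_eq_bernoulliProb]
  exact hbound _ _
    (bernoulliProb_hasLargeOuterCores_le_one_sub_pow (Set.Ioo_subset_Icc_self hp) hε.le
      hG.1.degree_le)
    fun hN => hlarge _ hN rfl hG (by exact_mod_cast hg)

theorem two_cores_outside_giant_are_small (d : ℕ) (hd : 3 ≤ d) (p : ℝ)
    (hp : 1 / ((d : ℝ) - 1) < p) (hp1 : p < 1)
    (ε b : ℝ) (hε : 0 < ε) (hb : 0 < b) :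
    ∃ R : ℕ, 0 < R ∧ ∃ c > (0:ℝ),
      ∀ (V : Type) [Fintype V] [DecidableEq V] (G : SimpleGraph V),
        IsRegularExpander G b d → ((2 * R : ℕ) : ℕ∞) < G.girth →
        percProb G p (fun H =>
            ∃ c₁ : H.ConnectedComponent, IsLargestComp H c₁ ∧
              ε * Fintype.card V <
                ((Finset.univ.filter (fun v : V =>
                    H.connectedComponentMk v ≠ c₁ ∧
                    v ∈ (twoCoreComp H (H.connectedComponentMk v)).support)).card : ℝ))
          ≤ Real.exp (-c * Fintype.card V) :=
  two_cores_outside_giant_are_small_general d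
    ⟨hp.trans' (one_div_pos.2 (sub_pos.2 (mod_cast (by omega : 1 < d)))), hp1⟩ hε hb

end Percolation

end
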